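/- Fix a prime ℓ and let G be a closed subgroup of GL₂(ℤ_ℓ) with det(G) = ℤ_ℓ^×. If S is a nonabelian simple group that occurs as a quotient of some closed normal subgroup of G, then ℓ ≥ 5, G = GL₂(ℤ_ℓ), and S is isomorphic to SL₂(𝔽_ℓ)/{±I}. -/

import Mathlib

open Matrix MatrixGroups

instance : Fact (Even (Fintype.card (Fin 2))) := ⟨by decide⟩

/-!
Let `Γ(ℓᵏ)` be the kernel of reduction modulo `ℓᵏ`. A nonabelian simple quotient `S` of `N` is
perfect, hence kills `N ∩ Γ(ℓ)`. Indeed, the `ℓ`-th power map carries the leading term `a` of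
`1 + ℓʲ A`, `A ≡ a mod ℓ`, from level `j` to level `j + 1`, so by finiteness the leading terms of
`N` stabilize at some level `j`; then `N ∩ Γ(ℓʲ)` is topologically generated by any finite set of
elements realizing the stable leading terms. A map from `N ∩ Γ(ℓʲ)` onto a perfect group has a
kernel containing such a set, and this forces it to be trivial because in a finitely generated
pro-nilpotent group commutators are finite products of commutators with generators, hence
lie in the kernel by compactness. What is left of `N ∩ Γ(ℓ)` is nilpotent.

So `S` is a quotient of the image of `N` in `GL₂(𝔽_ℓ)`, and the image of `G` there is
nonsolvable with full determinant. If `ℓ` divides its order, it contains a unipotent element and,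
fixing no line, all of `SL₂(𝔽_ℓ)`. Otherwise every noncentral element fixes zero or two points of
the projective line, and counting fixed points shows that the group is solvable: the only
other possibility is an image of order `60` in `PGL₂`, where the elements of square determinant
would have index two.

Finally, for `ℓ ≥ 5`, `ℓ`-th powers of lifts of unipotent elements give every trace-zero matrix as
a leading term of `[G, G]` at level one, so successive approximation shows `SL₂(ℤ_ℓ) ≤ G`.
-/

section Solvability

variable {Γ : Type*} [Group Γ]

theorem isSolvable_of_isPGroup [Finite Γ] {p : ℕ} [Fact p.Prime] (h : IsPGroup p Γ) :
    Group.IsSolvable Γ :=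
  have := h.isNilpotent
  inferInstance

theorem isSolvable_of_squarefree_card [Finite Γ] (h : Squarefree (Nat.card Γ)) :
    Group.IsSolvable Γ :=
  have := IsZGroup.of_squarefree h
  inferInstance

theorem isSolvable_of_isSolvable_quotient (H : Subgroup Γ) [H.Normal] [Group.IsSolvable H]
    [Group.IsSolvable (Γ ⧸ H)] : Group.IsSolvable Γ :=
  Group.isSolvable_of_ker_le_range H.subtype (QuotientGroup.mk' H) (by simp)

theorem isSolvable_of_ker_le_center {Q : Type*} [Group Q] (f : Γ →* Q)
    (hf : f.ker ≤ Subgroup.center Γ) [Group.IsSolvable f.range] : Group.IsSolvable Γ :=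
  have : Group.IsSolvable (Subgroup.center Γ) :=
    Group.isSolvable_of_comm fun a b => Subtype.ext (b.2.comm a).symm
  Group.isSolvable_of_ker_le_range (Subgroup.center Γ).subtype f.rangeRestrict (by simpa)

theorem isSolvable_of_index_eq_two (H : Subgroup Γ) [Group.IsSolvable H] (h : H.index = 2) :
    Group.IsSolvable Γ := by
  have := Subgroup.normal_of_index_eq_two h
  have : IsCyclic (Γ ⧸ H) := isCyclic_of_prime_card (p := 2) h
  have : Group.IsSolvable (Γ ⧸ H) := Group.isSolvable_of_comm IsMulCommutative.is_comm.comm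
  exact isSolvable_of_isSolvable_quotient H

theorem isSolvable_of_index_le_two [Finite Γ] (H : Subgroup Γ) [Group.IsSolvable H]
    (h : H.index ≤ 2) : Group.IsSolvable Γ := by
  have h0 : H.index ≠ 0 := Subgroup.index_ne_zero_of_finite
  obtain h1 | h2 : H.index = 1 ∨ H.index = 2 := by omega
  · obtain rfl := Subgroup.index_eq_one.1 h1
    exact Group.isSolvable_of_surjective (f := (⊤ : Subgroup Γ).subtype)
      fun g => ⟨⟨g, trivial⟩, rfl⟩
  · exact isSolvable_of_index_eq_two H h2

theorem squarefree_thirty : Squarefree 30 := by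
  decide +kernel

theorem isSolvable_of_card_dvd_three_mul_two_pow [Finite Γ] {k : ℕ}
    (h : Nat.card Γ ∣ 3 * 2 ^ k) : Group.IsSolvable Γ := by
  obtain ⟨P⟩ : Nonempty (Sylow 2 Γ) := inferInstance
  have hP : (P : Subgroup Γ).index ∣ 3 :=
    ((Nat.prime_two.coprime_iff_not_dvd.2 P.not_dvd_index).symm.pow_right k).dvd_of_dvd_mul_right
      ((Subgroup.index_dvd_card _).trans h)
  have : Group.IsSolvable (P : Subgroup Γ).normalCore :=
    isSolvable_of_isPGroup (P.isPGroup'.to_le P.1.normalCore_le)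
  have : Group.IsSolvable (MulAction.toPermHom Γ (Γ ⧸ P.1)).range := by
    refine isSolvable_of_squarefree_card (squarefree_thirty.squarefree_of_dvd ?_)
    calc Nat.card (MulAction.toPermHom Γ (Γ ⧸ P.1)).range
        ∣ (P.1.index).factorial := by
          rw [Subgroup.index, ← Nat.card_perm]
          exact Subgroup.card_subgroup_dvd_card _
      _ ∣ (3 : ℕ).factorial := Nat.factorial_dvd_factorial (Nat.le_of_dvd three_pos hP)
      _ ∣ 30 := by decide
  exact Group.isSolvable_of_ker_le_range P.1.normalCore.subtype
    (MulAction.toPermHom Γ (Γ ⧸ P.1)).rangeRestrict (by simp [Subgroup.normalCore_eq_ker])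

theorem isSolvable_of_card_eq_sixty_of_index_eq_two (h : Nat.card Γ = 60) {H : Subgroup Γ}
    (hH : H.index = 2) : Group.IsSolvable Γ := by
  have : Finite Γ := Nat.finite_of_card_ne_zero (by simp [h])
  have hcard : Nat.card H = 30 := by have := H.card_mul_index; lia
  have : Group.IsSolvable H := isSolvable_of_squarefree_card (hcard ▸ squarefree_thirty)
  exact isSolvable_of_index_eq_two H hH

end Solvability

section KleinCount

theorem eq_twelve_or_twentyFour_or_sixty_of_three_divisors {n m₁ m₂ m₃ : ℕ}
    (d₁ : m₁ ∣ n) (d₂ : m₂ ∣ n) (d₃ : m₃ ∣ n) (l₁ : 3 ≤ m₁) (l₂ : 3 ≤ m₂) (l₃ : 3 ≤ m₃)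
    (hsum : m₁ + m₂ + m₃ = n + 2) : n = 12 ∨ n = 24 ∨ n = 60 := by
  wlog h₁₂ : m₂ ≤ m₁ generalizing m₁ m₂ m₃
  · exact this d₂ d₁ d₃ l₂ l₁ l₃ (by omega) (by omega)
  wlog h₁₃ : m₃ ≤ m₁ generalizing m₁ m₂ m₃
  · exact this d₃ d₂ d₁ l₃ l₂ l₁ (by omega) (by omega) (by omega)
  wlog h₂₃ : m₃ ≤ m₂ generalizing m₁ m₂ m₃
  · exact this d₁ d₃ d₂ l₁ l₃ l₂ (by omega) h₁₃ h₁₂ (by omega)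
  obtain ⟨e₁, rfl⟩ := d₁
  obtain ⟨e₂, h₂⟩ := d₂
  obtain ⟨e₃, h₃⟩ := d₃
  have he₁ : e₁ = 2 := by
    have : e₁ < 3 := by by_contra!; nlinarith
    interval_cases e₁ <;> omega
  subst he₁
  have he₂ : e₂ = 3 := by
    have : e₂ < 4 := by by_contra!; nlinarith
    interval_cases e₂ <;> omega
  subst he₂
  have he₃ : e₃ < 6 := by by_contra!; nlinarith
  interval_cases e₃ <;> omega

-- At most three of the `m i` differ from `n`, as each of those contributes at least `n / 2`;
-- at least three do, as each contributes at most `n - 3`.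
theorem eq_twelve_or_twentyFour_or_sixty_of_sum_eq {ι : Type*} [Fintype ι] {n : ℕ} {m : ι → ℕ}
    (hdvd : ∀ i, m i ∣ n) (hm : ∀ i, 3 ≤ m i) (hn : 2 ≤ n)
    (hsum : ∑ i, ((n : ℤ) - m i) = 2 * (n - 1)) : n = 12 ∨ n = 24 ∨ n = 60 := by
  classical
  set T : Finset ι := {i | m i ≠ n} with hT
  have hsumT : ∑ i ∈ T, ((n : ℤ) - m i) = 2 * (n - 1) := by
    rw [← hsum]
    refine Finset.sum_subset (Finset.subset_univ T) fun i _ hi => ?_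
    have : m i = n := by simpa [hT] using hi
    simp [this]
  have hhalf : ∀ i ∈ T, (n : ℤ) ≤ 2 * ((n : ℤ) - m i) := fun i hi => by
    obtain ⟨e, he⟩ := hdvd i
    have : m i ≠ n := by simpa [hT] using hi
    have : 2 ≤ e := by
      by_contra!
      interval_cases e <;> omega
    zify at this he
    nlinarith
  have hcard_lt : T.card < 4 := by
    by_contra! h
    have hle := Finset.card_nsmul_le_sum T _ _ hhalf
    rw [← Finset.mul_sum, hsumT, nsmul_eq_mul] at hle
    zify at h hn
    nlinarith
  have hcard_gt : 2 < T.card := by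
    by_contra! h
    have hle := Finset.sum_le_card_nsmul T (fun i => (n : ℤ) - m i) (n - 3) fun i _ => by
      have := hm i
      omega
    rw [hsumT, nsmul_eq_mul] at hle
    zify at h hn
    by_cases h3 : (n : ℤ) ≤ 3 <;> nlinarith
  obtain ⟨a, b, c, hab, hac, hbc, hTabc⟩ := Finset.card_eq_three.1 (show T.card = 3 by omega)
  rw [hTabc, Finset.sum_insert (by simp [hab, hac]), Finset.sum_pair hbc] at hsumT
  exact eq_twelve_or_twentyFour_or_sixty_of_three_divisors (hdvd a) (hdvd b) (hdvd c) (hm a) (hm b)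
    (hm c) (by omega)

variable {Γ X : Type*} [Group Γ] [Finite Γ] [MulAction Γ X]

open MulAction

theorem card_eq_sum_index_stabilizer [Fintype (orbitRel.Quotient Γ X)] :
    Nat.card X = ∑ ω : orbitRel.Quotient Γ X, (stabilizer Γ ω.out).index := by
  rw [Nat.card_congr (selfEquivSigmaOrbitsQuotientStabilizer Γ X), Nat.card_sigma]
  rfl

theorem sum_card_sub_index_stabilizer [Finite X] [Fintype (orbitRel.Quotient Γ X)]
    (hfix : ∀ g : Γ, g ≠ 1 → Nat.card (fixedBy X g) = 2) :
    ∑ ω : orbitRel.Quotient Γ X, ((Nat.card Γ : ℤ) - (stabilizer Γ ω.out).index)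
      = 2 * (Nat.card Γ - 1) := by
  classical
  have := Fintype.ofFinite Γ
  have := Fintype.ofFinite X
  have hburnside : Nat.card X + 2 * (Nat.card Γ - 1)
      = Fintype.card (orbitRel.Quotient Γ X) * Nat.card Γ := by
    have hne : ∀ g ∈ Finset.univ.erase (1 : Γ), Fintype.card (fixedBy X g) = 2 := fun g hg => by
      rw [← Nat.card_eq_fintype_card, hfix g (Finset.ne_of_mem_erase hg)]
    rw [Nat.card_eq_fintype_card (α := Γ), ← sum_card_fixedBy_eq_card_orbits_mul_card_group Γ X,
      ← Finset.add_sum_erase _ _ (Finset.mem_univ (1 : Γ)), Finset.sum_congr rfl hne]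
    simp [Finset.card_erase_of_mem, mul_comm, fixedBy_one_eq_univ]
  rw [Finset.sum_sub_distrib, Finset.sum_const, ← Nat.cast_sum, ← card_eq_sum_index_stabilizer,
    Finset.card_univ, nsmul_eq_mul, ← Nat.cast_mul, ← hburnside]
  push_cast [Nat.one_le_iff_ne_zero.2 Nat.card_pos.ne']
  ring

/- This is Klein's count for the finite groups of rotations of the sphere, where every nontrivial
rotation fixes two points. -/
theorem isSolvable_or_card_of_card_fixedBy_eq_two [Finite X]
    (hfix : ∀ g : Γ, g ≠ 1 → Nat.card (fixedBy X g) = 2)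
    (hstab : ∀ x : X, Group.IsSolvable (stabilizer Γ x)) :
    Group.IsSolvable Γ ∨ Nat.card Γ = 12 ∨ Nat.card Γ = 24 ∨ Nat.card Γ = 60 := by
  classical
  have := Fintype.ofFinite (orbitRel.Quotient Γ X)
  by_cases hindex : ∃ x : X, (stabilizer Γ x).index ≤ 2
  · obtain ⟨x, hx⟩ := hindex
    exact Or.inl (isSolvable_of_index_le_two _ hx)
  rcases subsingleton_or_nontrivial Γ with _ | _
  · exact Or.inl (Group.isSolvable_of_comm fun _ _ => Subsingleton.elim _ _)
  push Not at hindex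
  exact Or.inr (eq_twelve_or_twentyFour_or_sixty_of_sum_eq
    (m := fun ω : orbitRel.Quotient Γ X => (stabilizer Γ ω.out).index)
    (fun ω => Subgroup.index_dvd_card _) (fun ω => hindex ω.out) Finite.one_lt_card
    (sum_card_sub_index_stabilizer hfix))

end KleinCount

section ProjectiveLine

open MulAction OnePoint
open scoped OnePoint

variable {K : Type*} [Field K]

theorem mem_center_of_pow_eq_one {g : GL (Fin 2) K} (hlower : g 1 0 = 0) (hdiag : g 0 0 = g 1 1)
    {m : ℕ} (hm : (m : K) ≠ 0) (hpow : g ^ m = 1) : g ∈ Subgroup.center (GL (Fin 2) K) := by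
  have hdet : g 0 0 ≠ 0 := fun h => g.det_ne_zero (by simp [det_fin_two, h, hlower])
  obtain ⟨t, hg⟩ : ∃ t : K, g = GeneralLinearGroup.scalar (Fin 2) (Units.mk0 _ hdet) *
      GeneralLinearGroup.upperRightHom t := by
    refine ⟨g 0 1 / g 0 0, GeneralLinearGroup.ext fun i j => ?_⟩
    fin_cases i <;> fin_cases j <;>
      simp [mul_apply, Fin.sum_univ_two, hlower, ← hdiag, mul_div_cancel₀, hdet]
  have ht : (m : K) * t = 0 := by
    rw [hg, Commute.mul_pow (GeneralLinearGroup.scalar_commute _ _), ← map_pow,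
      ← AddChar.map_nsmul_eq_pow] at hpow
    simpa [mul_apply, Fin.sum_univ_two, diagonal_pow, hdet] using congr($hpow 0 1)
  have ht : t = 0 := (mul_eq_zero.1 ht).resolve_left hm
  rw [hg, ht, AddChar.map_zero_eq_one, mul_one, GeneralLinearGroup.center_eq_range_scalar]
  exact ⟨_, rfl⟩

variable [DecidableEq K]

theorem isSolvable_stabilizer_infty :
    Group.IsSolvable (stabilizer (GL (Fin 2) K) (∞ : OnePoint K)) := by
  have hlower (g : stabilizer (GL (Fin 2) K) (∞ : OnePoint K)) : g.1 1 0 = 0 :=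
    smul_infty_eq_self_iff.1 g.2
  let diag : stabilizer (GL (Fin 2) K) (∞ : OnePoint K) →* K × K :=
    { toFun g := (g.1 0 0, g.1 1 1)
      map_one' := by simp
      map_mul' g h := by simp [mul_apply, Fin.sum_univ_two, hlower] }
  have hker : Group.IsSolvable diag.toHomUnits.ker := by
    refine Group.isSolvable_of_comm fun g h => Subtype.ext <| Subtype.ext <|
      GeneralLinearGroup.ext fun i j => ?_
    have hdiag (g : diag.toHomUnits.ker) : g.1.1 0 0 = 1 ∧ g.1.1 1 1 = 1 :=
      Prod.ext_iff.1 (Units.ext_iff.1 g.2)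
    fin_cases i <;> fin_cases j <;>
      simp [mul_apply, Fin.sum_univ_two, hlower, hdiag, add_comm]
  exact Group.isSolvable_of_ker_le_range diag.toHomUnits.ker.subtype diag.toHomUnits (by simp)

theorem exists_smul_infty_eq (p : OnePoint K) : ∃ h : GL (Fin 2) K, h • (∞ : OnePoint K) = p := by
  induction p using OnePoint.rec with
  | infty => exact ⟨1, one_smul _ _⟩
  | coe x =>
    exact ⟨GeneralLinearGroup.mkOfDetNeZero !![x, -1; 1, 0] (by simp),
      by simp [smul_infty_eq_ite, GeneralLinearGroup.mkOfDetNeZero]⟩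

theorem isSolvable_stabilizer (p : OnePoint K) :
    Group.IsSolvable (stabilizer (GL (Fin 2) K) p) := by
  obtain ⟨h, rfl⟩ := exists_smul_infty_eq p
  have := isSolvable_stabilizer_infty (K := K)
  let e := stabilizerEquivStabilizer (a := (∞ : OnePoint K)) (g := h) rfl
  exact Group.isSolvable_of_surjective (f := e.toMonoidHom) e.surjective

theorem mem_center_iff_forall_smul_eq_self {g : GL (Fin 2) K} :
    g ∈ Subgroup.center (GL (Fin 2) K) ↔ ∀ p : OnePoint K, g • p = p := by
  rw [GeneralLinearGroup.mem_center_iff_val_mem_range_scalar,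
    ← GeneralLinearGroup.fixpointPolynomial_eq_zero_iff]
  refine ⟨fun hg p => ?_, fun hg => ?_⟩
  · induction p using OnePoint.rec with
    | infty =>
      have : g.fixpointPolynomial.coeff 2 = 0 := by simp [hg]
      simpa [smul_infty_eq_self_iff, GeneralLinearGroup.fixpointPolynomial] using this
    | coe x => simp [← GeneralLinearGroup.fixpointPolynomial_aeval_eq_zero_iff, hg]
  · have hinfty := smul_infty_eq_self_iff.1 (hg ∞)
    have hzero := GeneralLinearGroup.fixpointPolynomial_aeval_eq_zero_iff.2 (hg (0 : K))
    have hone := GeneralLinearGroup.fixpointPolynomial_aeval_eq_zero_iff.2 (hg (1 : K))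
    simp_all [GeneralLinearGroup.fixpointPolynomial, sub_eq_zero]

theorem ker_toPermHom_onePoint : (toPermHom (GL (Fin 2) K) (OnePoint K)).ker =
    Subgroup.center (GL (Fin 2) K) := by
  ext g
  rw [mem_center_iff_forall_smul_eq_self]
  exact Equiv.ext_iff

theorem fixedBy_eq_pair {g : GL (Fin 2) K} (hlower : g 1 0 = 0) (hdiag : g 0 0 ≠ g 1 1) :
    fixedBy (OnePoint K) g = {∞, ((g 0 1 / (g 1 1 - g 0 0) : K) : OnePoint K)} := by
  ext p
  induction p using OnePoint.rec with
  | infty => simp [smul_infty_eq_self_iff, hlower]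
  | coe x =>
    simp [← GeneralLinearGroup.fixpointPolynomial_aeval_eq_zero_iff, hlower,
      GeneralLinearGroup.fixpointPolynomial, eq_div_iff (sub_ne_zero.2 hdiag.symm), mul_comm x,
      sub_eq_zero]

theorem card_fixedBy_eq_two {g : GL (Fin 2) K} (hg : g ∉ Subgroup.center (GL (Fin 2) K))
    {p : OnePoint K} (hp : g • p = p) {m : ℕ} (hm : (m : K) ≠ 0) (hpow : g ^ m = 1) :
    Nat.card (fixedBy (OnePoint K) g) = 2 := by
  obtain ⟨h, rfl⟩ := exists_smul_infty_eq p
  obtain ⟨t, rfl⟩ : ∃ t, g = h * t * h⁻¹ := ⟨h⁻¹ * g * h, by group⟩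
  have hlower : t 1 0 = 0 := by
    rwa [mul_smul, mul_smul, inv_smul_smul, smul_left_cancel_iff, smul_infty_eq_self_iff] at hp
  have hdiag : t 0 0 ≠ t 1 1 := fun hdiag => hg <|
    (Subgroup.center _).normal_of_characteristic.conj_mem _
      (mem_center_of_pow_eq_one hlower hdiag hm (by simpa [conj_pow] using hpow)) h
  rw [← smul_fixedBy, Nat.card_coe_set_eq, Set.ncard_smul_set, fixedBy_eq_pair hlower hdiag,
    Set.ncard_pair (OnePoint.infty_ne_coe _)]

end ProjectiveLine

section CoprimeOrder

open MulAction
open scoped OnePoint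

theorem exists_finite_extension_splits_charpoly.{u} (F : Type u) [Field F] [Finite F] (n : Type*)
    [Fintype n] [DecidableEq n] :
    ∃ (k : Type u) (_ : Field k) (_ : Finite k) (i : F →+* k),
      ∀ A : Matrix n n F, (A.charpoly.map i).Splits := by
  have := Fintype.ofFinite (Matrix n n F)
  let P : Polynomial F := ∏ A : Matrix n n F, A.charpoly
  have hP : P ≠ 0 := Finset.prod_ne_zero_iff.2 fun A _ => A.charpoly_monic.ne_zero
  refine ⟨P.SplittingField, inferInstance, Module.finite_of_finite F, algebraMap F _, fun A => ?_⟩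
  exact (Polynomial.SplittingField.splits P).of_dvd ((Polynomial.map_ne_zero_iff
    (algebraMap F P.SplittingField).injective).2 hP)
    (Polynomial.map_dvd _ (Finset.dvd_prod_of_mem _ (Finset.mem_univ A)))

variable {K : Type*} [Field K] [DecidableEq K]

theorem exists_smul_eq_self_of_splits_charpoly {g : GL (Fin 2) K} (hg : g.1.charpoly.Splits) :
    ∃ p : OnePoint K, g • p = p := by
  by_cases hlower : g 1 0 = 0
  · exact ⟨∞, OnePoint.smul_infty_eq_self_iff.2 hlower⟩
  obtain ⟨l, hl⟩ := hg.exists_eval_eq_zero (by rw [charpoly_degree_eq_dim]; simp)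
  refine ⟨((l - g 1 1) / g 1 0 : K), ?_⟩
  rw [← GeneralLinearGroup.fixpointPolynomial_aeval_eq_zero_iff]
  have hl : l ^ 2 - (g 0 0 + g 1 1) * l + (g 0 0 * g 1 1 - g 0 1 * g 1 0) = 0 := by
    simpa [charpoly_fin_two, trace_fin_two, det_fin_two] using hl
  simp only [GeneralLinearGroup.fixpointPolynomial, map_sub, map_mul, map_add,
    Polynomial.aeval_C, Polynomial.aeval_X, map_pow, Algebra.algebraMap_self_apply]
  field_simp
  linear_combination hl

theorem isSolvable_range_or_card_range_eq_sixty [Finite K] {Γ : Type*} [Group Γ] [Finite Γ]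
    (hcard : (Nat.card Γ : K) ≠ 0) (f : Γ →* GL (Fin 2) K)
    (hfix : ∀ g, ∃ p : OnePoint K, f g • p = p) :
    Group.IsSolvable ((toPermHom (GL (Fin 2) K) (OnePoint K)).comp f).range ∨
      Nat.card ((toPermHom (GL (Fin 2) K) (OnePoint K)).comp f).range = 60 := by
  have : Finite (OnePoint K) := inferInstanceAs (Finite (Option K))
  set τ := (toPermHom (GL (Fin 2) K) (OnePoint K)).comp f
  have htwo : ∀ σ : τ.range, σ ≠ 1 → Nat.card (fixedBy (OnePoint K) σ) = 2 := by
    rintro ⟨_, g, rfl⟩ hne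
    obtain ⟨p, hp⟩ := hfix g
    refine card_fixedBy_eq_two (fun hg => hne (Subtype.ext ?_)) hp hcard
      (by rw [← map_pow, pow_card_eq_one', map_one])
    exact MonoidHom.mem_ker.1 (ker_toPermHom_onePoint.ge hg)
  have hstab : ∀ p : OnePoint K, Group.IsSolvable (stabilizer τ.range p) := fun p => by
    have hle : (stabilizer τ.range p).map τ.range.subtype ≤
        (stabilizer (GL (Fin 2) K) p).map (toPermHom (GL (Fin 2) K) (OnePoint K)) := by
      rintro _ ⟨⟨_, g, rfl⟩, hg, rfl⟩
      exact ⟨f g, hg, rfl⟩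
    have := isSolvable_stabilizer p
    have := Group.isSolvable_of_surjective (MonoidHom.subgroupMap_surjective
      (toPermHom (GL (Fin 2) K) (OnePoint K)) (stabilizer (GL (Fin 2) K) p))
    have := Group.isSolvable_of_isSolvable_injective (Subgroup.inclusion_injective hle)
    let e := (stabilizer τ.range p).equivMapOfInjective _ τ.range.subtype_injective
    exact Group.isSolvable_of_isSolvable_injective (f := e.toMonoidHom) e.injective
  rcases isSolvable_or_card_of_card_fixedBy_eq_two htwo hstab with h | h | h | h
  · exact Or.inl h
  · exact Or.inl (isSolvable_of_card_dvd_three_mul_two_pow (k := 2) (h ▸ by norm_num))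
  · exact Or.inl (isSolvable_of_card_dvd_three_mul_two_pow (k := 3) (h ▸ by norm_num))
  · exact Or.inr h

theorem mem_center_of_map_mem_center {Γ Q : Type*} [Group Γ] [Group Q] {f : Γ →* Q}
    (hf : Function.Injective f) {g : Γ} (hg : f g ∈ Subgroup.center Q) :
    g ∈ Subgroup.center Γ := by
  refine Subgroup.mem_center_iff.2 fun h => hf ?_
  rw [map_mul, map_mul, Subgroup.mem_center_iff.1 hg]

theorem det_mem_range_powMonoidHom_two {R : Type*} [CommRing R] {g : GL (Fin 2) R}
    (hg : g ∈ Subgroup.center (GL (Fin 2) R)) :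
    GeneralLinearGroup.det g ∈ (powMonoidHom 2 : Rˣ →* Rˣ).range := by
  rw [GeneralLinearGroup.center_eq_range_scalar] at hg
  obtain ⟨u, rfl⟩ := hg
  exact ⟨u, by simp⟩

variable {ℓ : ℕ} [Fact ℓ.Prime]

theorem index_range_powMonoidHom_two (hℓ : ℓ ≠ 2) :
    (powMonoidHom 2 : (ZMod ℓ)ˣ →* (ZMod ℓ)ˣ).range.index = 2 := by
  rw [IsCyclic.index_powMonoidHom_range, Nat.gcd_eq_right_iff_dvd, Nat.card_eq_fintype_card,
    ZMod.card_units]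
  exact ((Fact.out : ℓ.Prime).even_sub_one hℓ).two_dvd

/- The elements of `G` whose determinant is a square form a subgroup of index two containing the
scalars, which rules out the alternating group of degree five as image in `PGL₂`. -/
theorem isSolvable_of_not_dvd_card (hℓ : ℓ ≠ 2) {G : Subgroup (GL (Fin 2) (ZMod ℓ))}
    (hdet : G.map GeneralLinearGroup.det = ⊤) (hcard : ¬ ℓ ∣ Nat.card G) :
    Group.IsSolvable G := by
  classical
  obtain ⟨k, _, _, i, hsplits⟩ :=
    exists_finite_extension_splits_charpoly (ZMod ℓ) (Fin 2)
  have := charP_of_injective_ringHom i.injective ℓ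
  let f : G →* GL (Fin 2) k := (GeneralLinearGroup.map i).comp G.subtype
  set τ := (toPermHom (GL (Fin 2) k) (OnePoint k)).comp f
  have hker : ∀ g ∈ τ.ker, g.1 ∈ Subgroup.center (GL (Fin 2) (ZMod ℓ)) := fun g hg =>
    mem_center_of_map_mem_center (Units.map_injective (map_injective i.injective))
      (ker_toPermHom_onePoint.le hg)
  suffices Group.IsSolvable τ.range from isSolvable_of_ker_le_center τ fun g hg =>
    mem_center_of_map_mem_center G.subtype_injective (hker g hg)
  have hfix : ∀ g, ∃ p : OnePoint k, f g • p = p := fun g =>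
    exists_smul_eq_self_of_splits_charpoly (charpoly_map g.1.1 i ▸ hsplits g.1.1)
  have hcard' : (Nat.card G : k) ≠ 0 := mt (CharP.cast_eq_zero_iff k ℓ _).1 hcard
  obtain h | h := isSolvable_range_or_card_range_eq_sixty hcard' f hfix
  · exact h
  let Q : Subgroup G := (powMonoidHom 2).range.comap (GeneralLinearGroup.det.comp G.subtype)
  have hQ : Q.index = 2 := by
    rw [Subgroup.index_comap_of_surjective, index_range_powMonoidHom_two hℓ]
    rwa [← MonoidHom.range_eq_top, MonoidHom.range_comp, Subgroup.range_subtype]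
  refine isSolvable_of_card_eq_sixty_of_index_eq_two h (H := Q.map τ.rangeRestrict) ?_
  rw [Subgroup.index_map_eq _ τ.rangeRestrict_surjective, hQ]
  rw [MonoidHom.ker_rangeRestrict]
  exact fun g hg => det_mem_range_powMonoidHom_two (hker g hg)

end CoprimeOrder

section UnipotentElements

open OnePoint
open scoped OnePoint

theorem range_toGL_le_of_upperRightHom_mem {K : Type*} [Field K] {G : Subgroup (GL (Fin 2) K)}
    (hupper : ∀ t, GeneralLinearGroup.upperRightHom t ∈ G) {k : GL (Fin 2) K} (hk : k ∈ G)
    (hlower : k 1 0 ≠ 0) : (SpecialLinearGroup.toGL : SL(2, K) →* GL (Fin 2) K).range ≤ G := by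
  let E : K → GL (Fin 2) K := fun t => GeneralLinearGroup.upperRightHom t
  let w := E (-k 0 0 / k 1 0) * k * E (-k 1 1 / k 1 0)
  have hw : w ∈ G := mul_mem (mul_mem (hupper _) hk) (hupper _)
  have hw00 : w 0 0 = 0 := by
    simp [w, E, mul_apply, Fin.sum_univ_two, vecMul, dotProduct, hlower]
  have hw11 : w 1 1 = 0 := by
    simp [w, E, mul_apply, Fin.sum_univ_two, vecMul, dotProduct, mul_div_cancel₀, hlower]
  have hw10 : w 1 0 ≠ 0 := by
    simpa [w, E, mul_apply, Fin.sum_univ_two, vecMul, dotProduct] using hlower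
  have htrans {i j : Fin 2} (hij : i ≠ j) (c : K) :
      (SpecialLinearGroup.transvection hij c : GL (Fin 2) K) ∈ G := by
    fin_cases i <;> fin_cases j
    · exact absurd rfl hij
    · convert hupper c using 1
      ext i j
      fin_cases i <;> fin_cases j <;> simp [SpecialLinearGroup.transvection_coe]
    · have hconj : (SpecialLinearGroup.transvection hij c : GL (Fin 2) K) * w =
          w * E (c * w 0 1 / w 1 0) := by
        ext i j
        fin_cases i <;> fin_cases j <;>
          simp [E, mul_apply, Fin.sum_univ_two, SpecialLinearGroup.transvection_coe, hw00, hw11,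
            mul_div_cancel₀, hw10]
      rw [eq_mul_inv_of_mul_eq hconj]
      exact mul_mem (mul_mem hw (hupper _)) (inv_mem hw)
    · exact absurd rfl hij
  rintro _ ⟨A, rfl⟩
  exact SL2.transvection_induction (fun A => (A : GL (Fin 2) K) ∈ G) @htrans
    (fun A B hA hB => by simpa using mul_mem hA hB) A

theorem range_toGL_eq_ker_det {n R : Type*} [Fintype n] [DecidableEq n] [CommRing R] :
    (SpecialLinearGroup.toGL : SpecialLinearGroup n R →* GL n R).range =
      GeneralLinearGroup.det.ker :=
  SetLike.coe_injective <| SpecialLinearGroup.range_toGL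

theorem pow_apply_of_apply_eq_zero {R : Type*} [CommRing R] {g : GL (Fin 2) R}
    (hlower : g 1 0 = 0) (n : ℕ) :
    (g ^ n) 1 0 = 0 ∧ (g ^ n) 0 0 = g 0 0 ^ n ∧ (g ^ n) 1 1 = g 1 1 ^ n := by
  induction n with
  | zero => simp
  | succ n ih => simp_all [pow_succ, mul_apply, Fin.sum_univ_two]

variable {ℓ : ℕ} [Fact ℓ.Prime]

theorem exists_smul_eq_self_of_pow_eq_one {g : GL (Fin 2) (ZMod ℓ)} (hg : g ^ ℓ = 1) :
    ∃ p : OnePoint (ZMod ℓ), g • p = p := by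
  have hcard : ¬ ℓ ∣ Nat.card (OnePoint (ZMod ℓ)) := by
    rw [OnePoint, Finite.card_option, Nat.card_zmod, Nat.dvd_add_right dvd_rfl]
    exact (Fact.out : ℓ.Prime).not_dvd_one
  have hp : IsPGroup ℓ (Subgroup.zpowers g) := by
    rintro ⟨_, m, rfl⟩
    refine ⟨1, Subtype.ext ?_⟩
    simp only [pow_one, Subgroup.coe_pow, Subgroup.coe_one]
    rw [← zpow_natCast, zpow_comm, zpow_natCast, hg, _root_.one_zpow]
  have : Finite (OnePoint (ZMod ℓ)) := inferInstanceAs (Finite (Option (ZMod ℓ)))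
  obtain ⟨p, hfix⟩ := hp.nonempty_fixed_point_of_prime_not_dvd_card (OnePoint (ZMod ℓ)) hcard
  exact ⟨p, hfix ⟨g, Subgroup.mem_zpowers g⟩⟩

theorem upperRightHom_mem_zpowers {u : GL (Fin 2) (ZMod ℓ)} (hlower : u 1 0 = 0)
    (hpow : u ^ ℓ = 1) (hne : u ≠ 1) (t : ZMod ℓ) :
    GeneralLinearGroup.upperRightHom t ∈ Subgroup.zpowers u := by
  obtain ⟨-, h00, h11⟩ := pow_apply_of_apply_eq_zero hlower ℓ
  simp only [hpow, ZMod.pow_card, Units.val_one, one_apply_eq] at h00 h11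
  have hu : u = GeneralLinearGroup.upperRightHom (u 0 1) := by
    ext i j
    fin_cases i <;> fin_cases j <;> simp [← h00, ← h11, hlower]
  have hu01 : u 0 1 ≠ 0 := fun h => hne (by rw [hu, h, AddChar.map_zero_eq_one])
  refine ⟨(t / u 0 1).val, ?_⟩
  simp only [zpow_natCast]
  rw [hu, ← AddChar.map_nsmul_eq_pow, ← hu, nsmul_eq_mul, ZMod.natCast_zmod_val,
    div_mul_cancel₀ _ hu01]

theorem isSolvable_or_range_toGL_le_of_apply_eq_zero {G : Subgroup (GL (Fin 2) (ZMod ℓ))}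
    {u : GL (Fin 2) (ZMod ℓ)} (hu : u ∈ G) (hlower : u 1 0 = 0) (hpow : u ^ ℓ = 1) (hne : u ≠ 1) :
    Group.IsSolvable G ∨
      (SpecialLinearGroup.toGL : SL(2, ZMod ℓ) →* GL (Fin 2) (ZMod ℓ)).range ≤ G := by
  by_cases hall : ∀ k ∈ G, k 1 0 = 0
  · have hle : G ≤ MulAction.stabilizer (GL (Fin 2) (ZMod ℓ)) (∞ : OnePoint (ZMod ℓ)) :=
      fun k hk => smul_infty_eq_self_iff.2 (hall k hk)
    have := isSolvable_stabilizer_infty (K := ZMod ℓ)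
    exact .inl (Group.isSolvable_of_isSolvable_injective (Subgroup.inclusion_injective hle))
  · push Not at hall
    obtain ⟨k, hk, hk0⟩ := hall
    exact .inr (range_toGL_le_of_upperRightHom_mem
      (fun t => (Subgroup.zpowers_le.2 hu) (upperRightHom_mem_zpowers hlower hpow hne t)) hk hk0)

theorem isSolvable_or_range_toGL_le_of_dvd_card {G : Subgroup (GL (Fin 2) (ZMod ℓ))}
    (hcard : ℓ ∣ Nat.card G) :
    Group.IsSolvable G ∨
      (SpecialLinearGroup.toGL : SL(2, ZMod ℓ) →* GL (Fin 2) (ZMod ℓ)).range ≤ G := by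
  obtain ⟨⟨g, hgG⟩, horder⟩ := exists_prime_orderOf_dvd_card' ℓ hcard
  obtain ⟨hpow, hne⟩ := orderOf_eq_prime_iff.1 ((Subgroup.orderOf_mk g hgG).symm.trans horder)
  obtain ⟨p, hp⟩ := exists_smul_eq_self_of_pow_eq_one hpow
  obtain ⟨h, rfl⟩ := exists_smul_infty_eq p
  let c : MulAut (GL (Fin 2) (ZMod ℓ)) := MulAut.conj h⁻¹
  have hc : c g = h⁻¹ * g * h := by simp [c]
  have hlower : c g 1 0 = 0 := by
    rw [hc, ← smul_infty_eq_self_iff, mul_smul, mul_smul, hp, inv_smul_smul]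
  obtain hG | hG := isSolvable_or_range_toGL_le_of_apply_eq_zero
    (Subgroup.mem_map_of_mem c.toMonoidHom hgG) hlower
    (by rw [MulEquiv.toMonoidHom_eq_coe, MonoidHom.coe_coe, ← map_pow, hpow, map_one]) (by simpa)
  · let e := G.equivMapOfInjective c.toMonoidHom c.injective
    exact .inl (Group.isSolvable_of_isSolvable_injective (f := e.toMonoidHom) e.injective)
  · refine .inr fun A hA => ?_
    rw [range_toGL_eq_ker_det] at hA hG
    obtain ⟨y, hy, hyA⟩ := hG (show c A ∈ _ by simpa [c] using hA)
    rwa [← c.injective hyA]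

end UnipotentElements

section FiniteTheorem

variable {ℓ : ℕ} [Fact ℓ.Prime]

theorem isSolvable_GL_two_of_lt_five (hℓ : ℓ < 5) : Group.IsSolvable (GL (Fin 2) (ZMod ℓ)) := by
  refine isSolvable_of_card_dvd_three_mul_two_pow (k := 4) ?_
  rw [card_GL_field, Fin.prod_univ_two, ZMod.card]
  have hprime : ℓ.Prime := Fact.out
  interval_cases ℓ <;> revert hprime <;> decide

theorem isSolvable_or_range_toGL_le {G : Subgroup (GL (Fin 2) (ZMod ℓ))}
    (hdet : G.map GeneralLinearGroup.det = ⊤) :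
    Group.IsSolvable G ∨
      (SpecialLinearGroup.toGL : SL(2, ZMod ℓ) →* GL (Fin 2) (ZMod ℓ)).range ≤ G := by
  by_cases hcard : ℓ ∣ Nat.card G
  · exact isSolvable_or_range_toGL_le_of_dvd_card hcard
  · rcases eq_or_ne ℓ 2 with rfl | hℓ
    · have := isSolvable_GL_two_of_lt_five (ℓ := 2) (by decide)
      exact .inl inferInstance
    · exact .inl (isSolvable_of_not_dvd_card hℓ hdet hcard)

theorem exists_sq_ne_one_of_five_le (hℓ : 5 ≤ ℓ) : ∃ a : ZMod ℓ, a ≠ 0 ∧ a ^ 2 ≠ 1 := by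
  have hne (m : ℕ) (hm : m ≠ 0) (hmℓ : m < ℓ) : (m : ZMod ℓ) ≠ 0 := fun h =>
    Nat.not_dvd_of_pos_of_lt (Nat.pos_of_ne_zero hm) hmℓ ((ZMod.natCast_eq_zero_iff m ℓ).1 h)
  refine ⟨2, mod_cast hne 2 (by decide) (by omega), fun h => hne 3 (by decide) (by omega) ?_⟩
  linear_combination h

end FiniteTheorem

section PerfectQuotient

variable {S : Type*} [Group S]

theorem isPerfect_of_exists_mul_ne [IsSimpleGroup S] (h : ∃ a b : S, a * b ≠ b * a) :
    Group.IsPerfect S := by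
  obtain ⟨a, b, hab⟩ := h
  refine ⟨(Subgroup.commutator_normal ⊤ ⊤).eq_bot_or_eq_top.resolve_left fun hbot => hab ?_⟩
  exact commutatorElement_eq_one_iff_mul_comm.1 <| (Subgroup.mem_bot).1 <|
    hbot ▸ Subgroup.commutator_mem_commutator (Subgroup.mem_top a) (Subgroup.mem_top b)

theorem center_eq_bot_of_isPerfect [IsSimpleGroup S] [Group.IsPerfect S] :
    Subgroup.center S = ⊥ :=
  (Subgroup.center S).normal_of_characteristic.eq_bot_or_eq_top.resolve_right fun h =>
    Group.IsPerfect.not_isSolvable S <| Group.isSolvable_of_comm fun a b =>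
      (Subgroup.mem_center_iff.1 (h ▸ Subgroup.mem_top b) a)

theorem center_le_ker [IsSimpleGroup S] [Group.IsPerfect S] {Γ : Type*} [Group Γ] {f : Γ →* S}
    (hf : Function.Surjective f) : Subgroup.center Γ ≤ f.ker := fun z hz => by
  have : f z ∈ Subgroup.center S := Subgroup.mem_center_iff.2 <| hf.forall.2 fun g => by
    rw [← map_mul, ← map_mul, Subgroup.mem_center_iff.1 hz]
  rwa [center_eq_bot_of_isPerfect] at this

theorem exists_SL_apply_eq [Group.IsPerfect S] {n R : Type*} [Fintype n] [DecidableEq n]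
    [CommRing R] {N : Subgroup (GL n R)} {f : N →* S} (hf : Function.Surjective f) (s : S) :
    ∃ (A : SpecialLinearGroup n R) (hA : (A : GL n R) ∈ N), f ⟨A, hA⟩ = s := by
  have hs : s ∈ (commutator N).map f := by
    rw [map_commutator_eq, MonoidHom.range_eq_top.2 hf]
    exact Group.IsPerfect.mem_commutator
  obtain ⟨x, hx, rfl⟩ := hs
  have hdet : x.1 ∈ GeneralLinearGroup.det.ker :=
    Abelianization.commutator_subset_ker (GeneralLinearGroup.det.comp N.subtype) hx
  rw [← range_toGL_eq_ker_det] at hdet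
  obtain ⟨A, hA⟩ := hdet
  exact ⟨A, hA ▸ x.2, congrArg f (Subtype.ext hA)⟩

theorem SL_mem_center_iff_eq_one_or_eq_neg_one {R : Type*} [CommRing R] [IsDomain R]
    {x : SL(2, R)} : x ∈ Subgroup.center SL(2, R) ↔ x = 1 ∨ x = -1 := by
  rw [Matrix.SpecialLinearGroup.mem_center_iff]
  have hone : x = 1 ↔ (1 : Matrix (Fin 2) (Fin 2) R) = x := Subtype.ext_iff.trans eq_comm
  have hneg : x = -1 ↔ -(1 : Matrix (Fin 2) (Fin 2) R) = x := Subtype.ext_iff.trans eq_comm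
  simp only [hone, hneg, Fintype.card_fin, sq_eq_one_iff, or_and_right, exists_or, exists_eq_left,
    map_neg, map_one]

variable {K : Type*} [Field K]

theorem le_center_or_eq_top_of_normal (hK : ∃ a : K, a ≠ 0 ∧ a ^ 2 ≠ 1) (H : Subgroup SL(2, K))
    [H.Normal] : H ≤ Subgroup.center SL(2, K) ∨ H = ⊤ := by
  have := ProjectiveSpecialLinearGroup.rank_two_simple' hK
  obtain h | h := (Subgroup.Normal.map ‹H.Normal› (QuotientGroup.mk' (Subgroup.center SL(2, K)))
    (QuotientGroup.mk'_surjective _)).eq_bot_or_eq_top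
  · exact .inl (by rwa [Subgroup.map_eq_bot_iff, QuotientGroup.ker_mk'] at h)
  · obtain ⟨a, ha, hasq⟩ := hK
    have hsup : H ⊔ Subgroup.center SL(2, K) = ⊤ := by
      rw [← QuotientGroup.ker_mk' (Subgroup.center SL(2, K)), ← Subgroup.comap_map_eq, h,
        Subgroup.comap_top]
    rw [eq_top_iff, ← SL2.commutator_eq_top ha hasq]
    exact .inr (Subgroup.Normal.commutator_le_of_self_sup_commutative_eq_top hsup inferInstance)

theorem exists_surjective_SL_two_of_normalized [IsSimpleGroup S] [Group.IsPerfect S]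
    (hK : ∃ a : K, a ≠ 0 ∧ a ^ 2 ≠ 1) {N : Subgroup (GL (Fin 2) K)}
    (hN : SpecialLinearGroup.toGL.range ≤ Subgroup.normalizer (N : Set (GL (Fin 2) K)))
    {f : N →* S} (hf : Function.Surjective f) :
    ∃ φ : SL(2, K) →* S, Function.Surjective φ := by
  have : (N.comap (SpecialLinearGroup.toGL : SL(2, K) →* GL (Fin 2) K)).Normal :=
    ⟨fun n hn A => by simpa using Subgroup.le_normalizer_iff.1 hN A ⟨A, rfl⟩ n hn⟩
  obtain h | h := le_center_or_eq_top_of_normal hK (N.comap SpecialLinearGroup.toGL)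
  · refine absurd (Group.isSolvable_of_comm fun s t => ?_) (Group.IsPerfect.not_isSolvable S)
    obtain ⟨A, hA, rfl⟩ := exists_SL_apply_eq hf s
    obtain ⟨B, hB, rfl⟩ := exists_SL_apply_eq hf t
    rw [← map_mul, ← map_mul]
    exact congrArg f <| Subtype.ext <| by simp [← map_mul, Subgroup.mem_center_iff.1 (h hB) A]
  · refine ⟨f.comp (SpecialLinearGroup.toGL.codRestrict N fun A =>
      (h ▸ Subgroup.mem_top A : A ∈ N.comap SpecialLinearGroup.toGL)), fun s => ?_⟩
    obtain ⟨A, hA, rfl⟩ := exists_SL_apply_eq hf s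
    exact ⟨A, rfl⟩

theorem apply_eq_one_iff_eq_one_or_eq_neg_one [IsSimpleGroup S] [Group.IsPerfect S]
    (hK : ∃ a : K, a ≠ 0 ∧ a ^ 2 ≠ 1) {φ : SL(2, K) →* S} (hφ : Function.Surjective φ)
    (x : SL(2, K)) : φ x = 1 ↔ x = 1 ∨ x = -1 := by
  have hker : φ.ker ≤ Subgroup.center SL(2, K) :=
    (le_center_or_eq_top_of_normal hK φ.ker).resolve_right fun h => by
      obtain ⟨s, hs⟩ := exists_ne (1 : S)
      obtain ⟨A, rfl⟩ := hφ s
      exact hs (MonoidHom.mem_ker.1 (h ▸ Subgroup.mem_top A))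
  rw [← SL_mem_center_iff_eq_one_or_eq_neg_one, ← MonoidHom.mem_ker,
    hker.antisymm (center_le_ker hφ)]

end PerfectQuotient

section CommutatorProducts

open scoped commutatorElement Pointwise

variable {Q P : Type*} [Group Q] [Group P] {l : List Q}

/-- The set of products `⁅x₁, g₁⁆ * ⋯ * ⁅xₙ, gₙ⁆`, where `x₁, …, xₙ` is a fixed list and
`g₁, …, gₙ` are arbitrary; in a nilpotent group generated by the list it is the whole commutator
subgroup. -/
def commutatorProducts (l : List Q) : Set Q :=
  (l.map fun x => Set.range fun g => ⁅x, g⁆).prod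

theorem one_mem_commutatorProducts (l : List Q) : 1 ∈ commutatorProducts l :=
  Set.one_subset.1 <| List.one_le_prod_of_one_le fun s hs => by
    obtain ⟨x, -, rfl⟩ := List.mem_map.1 hs
    exact Set.one_subset.2 ⟨1, commutatorElement_one_right x⟩

theorem image_commutatorProducts {π : Q →* P} (hπ : Function.Surjective π) (l : List Q) :
    π '' commutatorProducts l = commutatorProducts (l.map π) := by
  simp only [commutatorProducts, Set.image_list_prod, List.map_map]
  congr 1
  refine List.map_congr_left fun x _ => ?_
  simp only [Function.comp_apply, ← Set.range_comp, ← hπ.range_comp fun g => ⁅π x, g⁆]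
  simp only [Function.comp_def, map_commutatorElement]

theorem commutatorProducts_subset {K : Subgroup Q} [K.Normal] (hl : ∀ x ∈ l, x ∈ K) :
    commutatorProducts l ⊆ K := by
  induction l with
  | nil => simp [commutatorProducts]
  | cons x l ih =>
    rw [List.forall_mem_cons] at hl
    have hx : Set.range (fun g : Q => ⁅x, g⁆) ⊆ K := Set.range_subset_iff.2 fun g =>
      Subgroup.commutator_le_left K ⊤ <|
        Subgroup.commutator_mem_commutator hl.1 (Subgroup.mem_top g)
    exact Set.mul_subset_iff.2 fun a ha b hb => mul_mem (hx ha) (ih hl.2 hb)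

theorem isCompact_commutatorProducts [TopologicalSpace Q] [IsTopologicalGroup Q] [CompactSpace Q]
    (l : List Q) : IsCompact (commutatorProducts l) := by
  induction l with
  | nil => exact isCompact_singleton
  | cons x l ih => exact (isCompact_range (f := fun g : Q => ⁅x, g⁆)
    (by simp only [commutatorElement_def]; fun_prop)).mul ih

theorem smul_commutatorProducts_of_mem {x a : Q} (hx : x ∈ l)
    (ha : ⁅x, a⁆ ∈ Subgroup.center Q) :
    ⁅x, a⁆ • commutatorProducts l = commutatorProducts l := by
  have hcomm := Subgroup.mem_center_iff.1 ha
  have hrange : ⁅x, a⁆ • Set.range (fun g : Q => ⁅x, g⁆) = Set.range fun g : Q => ⁅x, g⁆ := by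
    rw [Set.smul_set_range, ← (Equiv.mulRight a).surjective.range_comp fun g : Q => ⁅x, g⁆]
    congr! 2 with g
    rw [Function.comp_apply, Equiv.coe_mulRight, commutatorElement_mul_right_eq_mul_conj,
      hcomm, mul_assoc, mul_inv_cancel_right, smul_eq_mul]
  obtain ⟨l₁, l₂, rfl⟩ := List.append_of_mem hx
  have hsmul (s t : Set Q) : ⁅x, a⁆ • (s * t) = s * ⁅x, a⁆ • t := by
    ext
    simp [Set.mem_smul_set, Set.mem_mul, ← mul_assoc, hcomm]
  simp only [commutatorProducts, List.map_append, List.map_cons, List.prod_append, List.prod_cons]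
  rw [hsmul, ← smul_mul_assoc, hrange]

theorem smul_commutatorProducts (hl : Subgroup.closure {x | x ∈ l} = ⊤) {a : Q}
    (ha : ∀ q : Q, ⁅q, a⁆ ∈ Subgroup.center Q) (q : Q) :
    ⁅q, a⁆ • commutatorProducts l = commutatorProducts l := by
  let φ : Q →* Q := MonoidHom.mk' (fun q : Q => ⁅q, a⁆) fun x y => by
    rw [commutatorElement_mul_left_eq_conj_mul, Subgroup.mem_center_iff.1 (ha y),
      mul_inv_cancel_right, Subgroup.mem_center_iff.1 (ha x)]
  have hle : Subgroup.closure {x | x ∈ l} ≤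
      (MulAction.stabilizer Q (commutatorProducts l)).comap φ :=
    (Subgroup.closure_le _).2 fun x hx => smul_commutatorProducts_of_mem hx (ha x)
  exact hle (hl ▸ Subgroup.mem_top q)

theorem closure_setOf_mem_map (π : Q →* P) (l : List Q) :
    Subgroup.closure {x | x ∈ l.map π} = (Subgroup.closure {x | x ∈ l}).map π := by
  rw [MonoidHom.map_closure]
  congr 1
  ext
  simp

theorem map_mem_commutator (f : Q →* P) {y : Q} (hy : y ∈ commutator Q) : f y ∈ commutator P :=
  Subgroup.commutator_mono le_top le_top (map_commutator_eq Q f ▸ Subgroup.mem_map_of_mem f hy)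

theorem commutator_subset_commutatorProducts_of_lowerCentralSeries_eq_bot {k : ℕ}
    (hk : (⊤ : Subgroup Q).lowerCentralSeries (k + 1) = ⊥)
    (hl : Subgroup.closure {x | x ∈ l} = ⊤) : (commutator Q : Set Q) ⊆ commutatorProducts l := by
  induction k generalizing Q with
  | zero =>
    rw [zero_add, Subgroup.top_lowerCentralSeries_one] at hk
    simpa [hk] using one_mem_commutatorProducts l
  | succ k ih =>
    set γ := (⊤ : Subgroup Q).lowerCentralSeries (k + 1)
    let π : Q →* Q ⧸ γ := QuotientGroup.mk' γ
    have hπ : Function.Surjective π := QuotientGroup.mk'_surjective γ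
    have hγ : γ ≤ Subgroup.center Q := by
      rwa [Subgroup.lowerCentralSeries_succ, Subgroup.commutator_top_right_eq_bot_iff_le_center]
        at hk
    have hstab : γ ≤ MulAction.stabilizer Q (commutatorProducts l) := by
      rw [show γ = ⁅⊤, (⊤ : Subgroup Q).lowerCentralSeries k⁆ from Subgroup.commutator_comm _ _,
        Subgroup.commutator_le]
      refine fun q _ a ha => smul_commutatorProducts hl (fun g => hγ ?_) q
      have hmem := Subgroup.commutator_mem_commutator (Subgroup.mem_top g) ha
      rwa [Subgroup.commutator_comm] at hmem
    intro y hy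
    have hπl : Subgroup.closure {x | x ∈ l.map π} = ⊤ := by
      rw [closure_setOf_mem_map, hl, Subgroup.map_top_of_surjective π hπ]
    have hπk : (⊤ : Subgroup (Q ⧸ γ)).lowerCentralSeries (k + 1) = ⊥ := by
      rw [← MonoidHom.range_eq_top.2 hπ, MonoidHom.range_eq_map, ← Subgroup.map_lowerCentralSeries,
        QuotientGroup.map_mk'_self]
    obtain ⟨w, hw, hwy⟩ := image_commutatorProducts hπ l ▸ ih hπk hπl (map_mem_commutator π hy)
    have hmem : y * w⁻¹ ∈ γ := by
      rw [← QuotientGroup.ker_mk' γ, MonoidHom.mem_ker, map_mul, map_inv]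
      exact mul_inv_eq_one.2 hwy.symm
    rw [← MulAction.mem_stabilizer_iff.1 (hstab hmem)]
    exact ⟨w, hw, inv_mul_cancel_right y w⟩

theorem commutator_subset_commutatorProducts [Group.IsNilpotent Q]
    (hl : Subgroup.closure {x | x ∈ l} = ⊤) : (commutator Q : Set Q) ⊆ commutatorProducts l := by
  obtain ⟨k, hk⟩ := Subgroup.nilpotent_iff_lowerCentralSeries.1 ‹Group.IsNilpotent Q›
  exact commutator_subset_commutatorProducts_of_lowerCentralSeries_eq_bot
    (eq_bot_mono (Subgroup.lowerCentralSeries_antitone _ k.le_succ) hk) hl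

end CommutatorProducts

section ProNilpotent

open Topology

variable {U : Type*} [Group U] [TopologicalSpace U] [IsTopologicalGroup U] {ι : Type*}
  {Γ : ι → Subgroup U}

theorem mem_closure_iff_of_hasBasis_nhds_one
    (hΓ : (𝓝 (1 : U)).HasBasis (fun _ => True) fun i => (Γ i : Set U)) {s : Set U} {x : U} :
    x ∈ closure s ↔ ∀ i, ∃ y ∈ s, x / y ∈ Γ i := by
  simpa [div_mem_comm_iff (b := x)] using mem_closure_iff_nhds_basis (hΓ.nhds_of_one x)

theorem commutator_le_of_dense_closure [CompactSpace U] [T2Space U] [∀ i, (Γ i).Normal]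
    [∀ i, Group.IsNilpotent (U ⧸ Γ i)]
    (hΓ : (𝓝 (1 : U)).HasBasis (fun _ => True) fun i => (Γ i : Set U)) {s : Set U}
    (hs : s.Finite) (hdense : Dense (Subgroup.closure s : Set U)) {K : Subgroup U} [K.Normal]
    (hsK : s ⊆ K) : commutator U ≤ K := by
  obtain ⟨l, rfl⟩ : ∃ l : List U, {x | x ∈ l} = s := ⟨hs.toFinset.toList, by ext; simp⟩
  intro y hy
  apply commutatorProducts_subset hsK
  rw [← (isCompact_commutatorProducts l).isClosed.closure_eq,
    mem_closure_iff_of_hasBasis_nhds_one hΓ]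
  intro i
  let π : U →* U ⧸ Γ i := QuotientGroup.mk' (Γ i)
  have hπ : Function.Surjective π := QuotientGroup.mk'_surjective (Γ i)
  have hπl : Subgroup.closure {x | x ∈ l.map π} = ⊤ := by
    rw [closure_setOf_mem_map, eq_top_iff]
    intro q _
    obtain ⟨x, rfl⟩ := hπ q
    obtain ⟨z, hz, hxz⟩ := (mem_closure_iff_of_hasBasis_nhds_one hΓ).1 (hdense x) i
    exact ⟨z, hz, (QuotientGroup.eq_iff_div_mem.2 hxz).symm⟩
  obtain ⟨w, hw, hwy⟩ := image_commutatorProducts hπ l ▸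
    commutator_subset_commutatorProducts hπl (map_mem_commutator π hy)
  exact ⟨w, hw, QuotientGroup.eq_iff_div_mem.1 hwy.symm⟩

end ProNilpotent

section CongruenceSubgroups

open scoped commutatorElement

variable {n R T : Type*} [CommRing R] [CommRing T] {c d : R}

theorem exists_eq_smul_iff {A : Matrix n n R} : (∃ B, A = c • B) ↔ ∀ i j, c ∣ A i j :=
  ⟨fun ⟨B, hB⟩ i j => ⟨B i j, by rw [hB, Matrix.smul_apply, smul_eq_mul]⟩,
    fun h => by choose B hB using h; exact ⟨of B, Matrix.ext hB⟩⟩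

variable [Fintype n] [DecidableEq n]

theorem mapMatrix_eq_zero_iff {f : R →+* T} (hf : RingHom.ker f = Ideal.span {c})
    {A : Matrix n n R} : f.mapMatrix A = 0 ↔ ∃ B, A = c • B := by
  rw [exists_eq_smul_iff, ← Matrix.ext_iff]
  simp only [RingHom.mapMatrix_apply, map_apply, Matrix.zero_apply, ← RingHom.mem_ker, hf,
    Ideal.mem_span_singleton]

theorem mem_ker_GL_map_iff {f : R →+* T} (hf : RingHom.ker f = Ideal.span {c}) {x : GL n R} :
    x ∈ (GeneralLinearGroup.map f).ker ↔ ∃ A, x.1 = 1 + c • A := by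
  have hx : GeneralLinearGroup.map f x = 1 ↔ f.mapMatrix (x.1 - 1) = 0 := by
    rw [map_sub, map_one, sub_eq_zero, ← Units.val_inj]
    rfl
  simp only [MonoidHom.mem_ker, hx, mapMatrix_eq_zero_iff hf, sub_eq_iff_eq_add']

/-- The principal congruence subgroup `{x | x ≡ 1 mod c}` of `GL n R`. -/
def principalCongruence (n : Type*) [Fintype n] [DecidableEq n] (c : R) : Subgroup (GL n R) :=
  (GeneralLinearGroup.map (Ideal.Quotient.mk (Ideal.span {c}))).ker

instance : (principalCongruence n c).Normal := MonoidHom.normal_ker _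

theorem mem_principalCongruence_iff {x : GL n R} :
    x ∈ principalCongruence n c ↔ ∃ A, x.1 = 1 + c • A :=
  mem_ker_GL_map_iff Ideal.mk_ker

theorem ker_GL_map_eq_principalCongruence {f : R →+* T} (hf : RingHom.ker f = Ideal.span {c}) :
    (GeneralLinearGroup.map f).ker = principalCongruence n c :=
  SetLike.ext fun _ => (mem_ker_GL_map_iff hf).trans mem_principalCongruence_iff.symm

theorem div_mem_principalCongruence_iff {x y : GL n R} :
    x / y ∈ principalCongruence n c ↔ ∃ A, x.1 = y.1 + c • A := by
  rw [mem_principalCongruence_iff]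
  constructor
  · rintro ⟨A, hA⟩
    refine ⟨A * y.1, ?_⟩
    rw [← smul_mul_assoc, ← one_add_mul, ← hA, ← Units.val_mul, div_mul_cancel]
  · rintro ⟨A, hA⟩
    refine ⟨A * (y⁻¹).1, ?_⟩
    rw [div_eq_mul_inv, Units.val_mul, hA, add_mul, Units.mul_inv, smul_mul_assoc]

theorem principalCongruence_le_of_dvd (h : c ∣ d) :
    principalCongruence n d ≤ principalCongruence n c := by
  obtain ⟨e, rfl⟩ := h
  intro x hx
  obtain ⟨A, hA⟩ := mem_principalCongruence_iff.1 hx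
  exact mem_principalCongruence_iff.2 ⟨e • A, by rw [hA, mul_smul]⟩

theorem commutator_principalCongruence_le :
    ⁅principalCongruence n c, principalCongruence n d⁆ ≤ principalCongruence n (c * d) := by
  rw [Subgroup.commutator_le]
  intro x hx y hy
  obtain ⟨A, hA⟩ := mem_principalCongruence_iff.1 hx
  obtain ⟨B, hB⟩ := mem_principalCongruence_iff.1 hy
  have hxy : ⁅x, y⁆ = x * y / (y * x) := by
    rw [commutatorElement_def, div_eq_mul_inv, _root_.mul_inv_rev, ← mul_assoc]
  rw [hxy, div_mem_principalCongruence_iff]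
  refine ⟨A * B - B * A, ?_⟩
  simp only [Units.val_mul, hA, hB, add_mul, mul_add, one_mul, mul_one, smul_mul_smul_comm]
  module

theorem lowerCentralSeries_le_principalCongruence {U : Subgroup (GL n R)}
    (hU : U ≤ principalCongruence n c) (k : ℕ) :
    U.lowerCentralSeries k ≤ principalCongruence n (c ^ (k + 1)) := by
  induction k with
  | zero => simpa using hU
  | succ k ih =>
    rw [Subgroup.lowerCentralSeries_succ, pow_succ]
    exact (Subgroup.commutator_mono ih hU).trans commutator_principalCongruence_le

theorem isNilpotent_quotient_principalCongruence {U : Subgroup (GL n R)}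
    (hU : U ≤ principalCongruence n c) (k : ℕ) :
    Group.IsNilpotent (U ⧸ (principalCongruence n (c ^ k)).subgroupOf U) := by
  refine Subgroup.nilpotent_iff_lowerCentralSeries.2 ⟨k, ?_⟩
  rw [← Subgroup.map_top_of_surjective _ (QuotientGroup.mk'_surjective _),
    ← Subgroup.map_lowerCentralSeries, Subgroup.map_eq_bot_iff, QuotientGroup.ker_mk',
    Subgroup.subgroupOf, ← Subgroup.map_le_iff_le_comap, Subgroup.map_lowerCentralSeries,
    ← MonoidHom.range_eq_map, Subgroup.range_subtype]
  exact (lowerCentralSeries_le_principalCongruence hU k).trans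
    (principalCongruence_le_of_dvd (pow_dvd_pow c k.le_succ))

end CongruenceSubgroups

section PadicTopology

open Topology

attribute [local instance] Matrix.normedAddCommGroup

variable {n : Type*} [Fintype n] [DecidableEq n] {ℓ : ℕ} [Fact ℓ.Prime]

instance : CompactSpace (GL n ℤ_[ℓ]) :=
  have : CompactSpace (Matrix n n ℤ_[ℓ]) := inferInstanceAs (CompactSpace (n → n → ℤ_[ℓ]))
  inferInstanceAs (CompactSpace (Matrix n n ℤ_[ℓ])ˣ)

theorem hasBasis_nhds_one_principalCongruence :
    (𝓝 (1 : GL n ℤ_[ℓ])).HasBasis (fun _ => True)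
      fun k : ℕ => (principalCongruence n ((ℓ : ℤ_[ℓ]) ^ k) : Set (GL n ℤ_[ℓ])) := by
  have hval : IsEmbedding (Units.val : GL n ℤ_[ℓ] → Matrix n n ℤ_[ℓ]) :=
    (Units.continuous_val.isClosedEmbedding Units.val_injective).isEmbedding
  rw [hval.nhds_eq_comap]
  have hℓ : 1 < (ℓ : ℝ) := mod_cast (Fact.out : ℓ.Prime).one_lt
  have hball := Metric.nhds_basis_closedBall_pow (x := (1 : Matrix n n ℤ_[ℓ]))
    (inv_pos.2 (one_pos.trans hℓ)) (inv_lt_one_of_one_lt₀ hℓ)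
  refine (hball.comap Units.val).congr (fun _ => Iff.rfl) fun k _ => Set.ext fun x => ?_
  rw [Set.mem_preimage, mem_closedBall_iff_norm, Matrix.norm_le_iff (by positivity),
    SetLike.mem_coe, mem_principalCongruence_iff]
  simp only [inv_pow, ← zpow_natCast (ℓ : ℝ), ← _root_.zpow_neg, ← sub_eq_iff_eq_add',
    PadicInt.norm_le_pow_iff_mem_span_pow, exists_eq_smul_iff, Ideal.mem_span_singleton]

theorem isClosed_principalCongruence (k : ℕ) :
    IsClosed (principalCongruence n ((ℓ : ℤ_[ℓ]) ^ k) : Set (GL n ℤ_[ℓ])) :=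
  Subgroup.isClosed_of_isOpen _ <| Subgroup.isOpen_of_mem_nhds _ <|
    hasBasis_nhds_one_principalCongruence.mem_of_mem trivial

end PadicTopology

section Binomial

theorem exists_one_add_pow_prime_eq {A : Type*} [Ring A] {p : ℕ} (hp : p.Prime) (Y : A) :
    ∃ B : A, (1 + Y) ^ p = 1 + p • Y + p • (Y ^ 2 * B) + Y ^ p := by
  have hsplit : Finset.Ioo 0 p = insert 1 (Finset.Ioo 1 p) := by
    ext k
    simp only [Finset.mem_Ioo, Finset.mem_insert]
    have := hp.one_lt
    omega
  refine ⟨∑ k ∈ Finset.Ioo 1 p, Y ^ (k - 2) * (p.choose k / p : ℕ), ?_⟩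
  have hsum : ∑ k ∈ Finset.Ioo 1 p, Y ^ (k - 1) * 1 ^ (p - k - 1) * ((p.choose k / p : ℕ) : A) =
      Y * ∑ k ∈ Finset.Ioo 1 p, Y ^ (k - 2) * ((p.choose k / p : ℕ) : A) := by
    rw [Finset.mul_sum]
    refine Finset.sum_congr rfl fun k hk => ?_
    rw [← mul_assoc, ← pow_succ', one_pow, mul_one,
      show k - 2 + 1 = k - 1 by have := Finset.mem_Ioo.1 hk; omega]
  rw [add_comm 1 Y, (Commute.one_right Y).add_pow_prime_eq hp, hsplit,
    Finset.sum_insert (by simp), hsum, pow_two, mul_assoc Y Y]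
  simp only [one_pow, mul_one, tsub_self, pow_zero, Nat.choose_one_right, Nat.div_self hp.pos,
    Nat.cast_one, nsmul_eq_mul, mul_add, mul_assoc]
  abel

end Binomial

section LeadingTerms

variable {n : Type*} [Fintype n] [DecidableEq n] {ℓ : ℕ} [Fact ℓ.Prime] {j : ℕ}
  {x y : GL n ℤ_[ℓ]} {a b : Matrix n n (ZMod ℓ)}

theorem ker_toZMod_eq_span : RingHom.ker (PadicInt.toZMod (p := ℓ)) = Ideal.span {(ℓ : ℤ_[ℓ])} :=
  PadicInt.ker_toZMod.trans PadicInt.maximalIdeal_eq_span_p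

theorem mapMatrix_toZMod_smul (A : Matrix n n ℤ_[ℓ]) :
    PadicInt.toZMod.mapMatrix ((ℓ : ℤ_[ℓ]) • A) = 0 :=
  (mapMatrix_eq_zero_iff ker_toZMod_eq_span).2 ⟨A, rfl⟩

/-- `x = 1 + ℓ ^ j • A` where `A` reduces to `a` modulo `ℓ`. -/
def HasLeadingTerm (j : ℕ) (x : GL n ℤ_[ℓ]) (a : Matrix n n (ZMod ℓ)) : Prop :=
  ∃ A, x.1 = 1 + (ℓ : ℤ_[ℓ]) ^ j • A ∧ PadicInt.toZMod.mapMatrix A = a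

theorem exists_hasLeadingTerm_iff :
    (∃ a, HasLeadingTerm j x a) ↔ x ∈ principalCongruence n ((ℓ : ℤ_[ℓ]) ^ j) := by
  simp only [HasLeadingTerm, mem_principalCongruence_iff, exists_comm (α := Matrix n n (ZMod ℓ)),
    exists_and_left, exists_eq', and_true]

namespace HasLeadingTerm

theorem div_mem (hx : HasLeadingTerm j x a) (hy : HasLeadingTerm j y a) :
    x / y ∈ principalCongruence n ((ℓ : ℤ_[ℓ]) ^ (j + 1)) := by
  obtain ⟨A, hA, rfl⟩ := hx
  obtain ⟨B, hB, hAB⟩ := hy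
  obtain ⟨C, hC⟩ := (mapMatrix_eq_zero_iff ker_toZMod_eq_span (A := A - B)).1
    (by rw [map_sub, hAB, sub_self])
  rw [div_mem_principalCongruence_iff]
  refine ⟨C, ?_⟩
  rw [hA, hB, eq_add_of_sub_eq hC]
  module

theorem of_div_mem (hx : HasLeadingTerm j x a)
    (hyx : y / x ∈ principalCongruence n ((ℓ : ℤ_[ℓ]) ^ (j + 1))) : HasLeadingTerm j y a := by
  obtain ⟨A, hA, rfl⟩ := hx
  obtain ⟨C, hC⟩ := div_mem_principalCongruence_iff.1 hyx
  refine ⟨A + (ℓ : ℤ_[ℓ]) • C, ?_, by rw [map_add, mapMatrix_toZMod_smul, add_zero]⟩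
  rw [hC, hA]
  module

theorem mul (hx : HasLeadingTerm (j + 1) x a) (hy : HasLeadingTerm (j + 1) y b) :
    HasLeadingTerm (j + 1) (x * y) (a + b) := by
  obtain ⟨A, hA, rfl⟩ := hx
  obtain ⟨B, hB, rfl⟩ := hy
  refine ⟨A + B + (ℓ : ℤ_[ℓ]) • ((ℓ : ℤ_[ℓ]) ^ j • (A * B)), ?_, ?_⟩
  · simp only [Units.val_mul, hA, hB, add_mul, mul_add, one_mul, mul_one, smul_mul_smul_comm]
    module
  · rw [map_add, mapMatrix_toZMod_smul, add_zero, map_add]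

theorem pow_prime (hj : j + 3 ≤ (j + 1) * ℓ) (hx : HasLeadingTerm (j + 1) x a) :
    HasLeadingTerm (j + 2) (x ^ ℓ) a := by
  obtain ⟨A, hA, rfl⟩ := hx
  obtain ⟨B, hB⟩ := exists_one_add_pow_prime_eq (Fact.out : ℓ.Prime) ((ℓ : ℤ_[ℓ]) ^ (j + 1) • A)
  obtain ⟨k, hk⟩ := Nat.exists_eq_add_of_le hj
  refine ⟨A + (ℓ : ℤ_[ℓ]) • ((ℓ : ℤ_[ℓ]) ^ j • (A ^ 2 * B) + (ℓ : ℤ_[ℓ]) ^ k • A ^ ℓ), ?_, ?_⟩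
  · rw [Units.val_pow_eq_pow_val, hA, hB, smul_pow, smul_pow, ← pow_mul, ← pow_mul, hk,
      smul_mul_assoc]
    simp only [← Nat.cast_smul_eq_nsmul ℤ_[ℓ]]
    module
  · rw [map_add, mapMatrix_toZMod_smul, add_zero]

theorem pow_prime_pow (hj : j + 3 ≤ (j + 1) * ℓ) (hx : HasLeadingTerm (j + 1) x a) (k : ℕ) :
    HasLeadingTerm (j + k + 1) (x ^ ℓ ^ k) a := by
  induction k with
  | zero => simpa using hx
  | succ k ih =>
    rw [pow_succ, pow_mul, ← add_assoc]
    have hℓ : 2 ≤ ℓ := (Fact.out : ℓ.Prime).two_le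
    exact ih.pow_prime (by nlinarith [hℓ])

end HasLeadingTerm

end LeadingTerms

section PadicNormalSubgroups

open Topology

variable {n : Type*} [Fintype n] [DecidableEq n] {ℓ : ℕ} [Fact ℓ.Prime] {i : ℕ}

theorem subset_closure_of_hasLeadingTerm {D X : Subgroup (GL n ℤ_[ℓ])} (hDX : D ≤ X)
    (hi : i + 3 ≤ (i + 1) * ℓ)
    (happrox : ∀ x ∈ X, ∃ d ∈ D, x / d ∈ principalCongruence n ((ℓ : ℤ_[ℓ]) ^ (i + 1)))
    (hlead : ∀ k, ∀ x ∈ X, ∀ a, HasLeadingTerm (i + k + 1) x a →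
      ∃ d ∈ D, HasLeadingTerm (i + 1) d a) :
    (X : Set (GL n ℤ_[ℓ])) ⊆ closure D := by
  intro x hx
  rw [mem_closure_iff_of_hasBasis_nhds_one hasBasis_nhds_one_principalCongruence]
  suffices h : ∀ k, ∃ d ∈ D, x / d ∈ principalCongruence n ((ℓ : ℤ_[ℓ]) ^ (i + k + 1)) from
    fun k => (h k).imp fun d => And.imp_right fun hd =>
      principalCongruence_le_of_dvd (pow_dvd_pow _ (by omega)) hd
  intro k
  induction k with
  | zero => exact happrox x hx
  | succ k ih =>
    obtain ⟨d, hd, hxd⟩ := ih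
    obtain ⟨a, ha⟩ := exists_hasLeadingTerm_iff.2 hxd
    obtain ⟨e, he, hea⟩ := hlead k _ (div_mem hx (hDX hd)) a ha
    refine ⟨e ^ ℓ ^ k * d, mul_mem (pow_mem he _) hd, ?_⟩
    rw [div_mul_eq_div_div_swap]
    exact ha.div_mem (hea.pow_prime_pow hi k)

theorem hasBasis_nhds_one_subgroupOf (U : Subgroup (GL n ℤ_[ℓ])) :
    (𝓝 (1 : U)).HasBasis (fun _ => True)
      fun k : ℕ => ((principalCongruence n ((ℓ : ℤ_[ℓ]) ^ k)).subgroupOf U : Set U) := by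
  rw [nhds_induced]
  exact hasBasis_nhds_one_principalCongruence.comap _

/-- A subgroup of `GL n ℤ_[ℓ]` consisting of elements `x ≡ 1 mod ℓ ^ (i + 1)`, all of whose leading
terms at deeper levels already occur at level `i + 1`. The numerical condition makes the `ℓ`-th
power map carry leading terms from each level `≥ i + 1` to the next one. -/
structure IsStableAt (i : ℕ) (U : Subgroup (GL n ℤ_[ℓ])) : Prop where
  add_three_le : i + 3 ≤ (i + 1) * ℓ
  le_principalCongruence : U ≤ principalCongruence n ((ℓ : ℤ_[ℓ]) ^ (i + 1))
  exists_hasLeadingTerm : ∀ k, ∀ x ∈ U, ∀ a, HasLeadingTerm (i + k + 1) x a →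
    ∃ y ∈ U, HasLeadingTerm (i + 1) y a

theorem exists_isStableAt_inf_principalCongruence (N : Subgroup (GL n ℤ_[ℓ])) :
    ∃ i, IsStableAt i (N ⊓ principalCongruence n ((ℓ : ℤ_[ℓ]) ^ (i + 1))) := by
  have hℓ : 2 ≤ ℓ := (Fact.out : ℓ.Prime).two_le
  let L (m : ℕ) : Set (Matrix n n (ZMod ℓ)) := {a | ∃ x ∈ N, HasLeadingTerm (m + 2) x a}
  have hL : Monotone L := monotone_nat_of_le_succ fun m a ⟨x, hx, ha⟩ =>
    ⟨x ^ ℓ, pow_mem hx ℓ, ha.pow_prime (j := m + 1) (by nlinarith)⟩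
  obtain ⟨m, hm⟩ := WellFoundedGT.monotone_chain_condition ⟨L, hL⟩
  refine ⟨m + 1, by nlinarith, inf_le_right, fun k x hx a ha => ?_⟩
  have hLm : L m = L (m + k) := hm (m + k) (by omega)
  have hmem : a ∈ L (m + k) := ⟨x, hx.1, by rwa [show m + k + 2 = m + 1 + k + 1 by omega]⟩
  obtain ⟨y, hy, hya⟩ := hLm.symm.subset hmem
  exact ⟨y, ⟨hy, exists_hasLeadingTerm_iff.1 ⟨a, hya⟩⟩, hya⟩

namespace IsStableAt

variable {U : Subgroup (GL n ℤ_[ℓ])} {K : Subgroup U}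

theorem exists_mem_hasLeadingTerm (hU : IsStableAt i U) (hK : commutator U ⊔ K = ⊤)
    {y : GL n ℤ_[ℓ]} (hy : y ∈ U) {a : Matrix n n (ZMod ℓ)} (hya : HasLeadingTerm (i + 1) y a) :
    ∃ x ∈ K, HasLeadingTerm (i + 1) x.1 a := by
  have hmem : (⟨y, hy⟩ : U) ∈ commutator U ⊔ K := by rw [hK]; exact Subgroup.mem_top _
  obtain ⟨c, hc, x, hx, hcx⟩ := Subgroup.mem_sup_of_normal_left.1 hmem
  refine ⟨x, hx, hya.of_div_mem ?_⟩
  have hcx' : x.1 / y = (c⁻¹ : U) := by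
    rw [show y = c.1 * x.1 from congrArg Subtype.val hcx.symm, div_mul_cancel_right,
      InvMemClass.coe_inv]
  have hle : ⁅U, U⁆ ≤ principalCongruence n ((ℓ : ℤ_[ℓ]) ^ (i + 1 + 1)) :=
    (Subgroup.commutator_mono hU.le_principalCongruence hU.le_principalCongruence).trans <|
      commutator_principalCongruence_le.trans <|
        principalCongruence_le_of_dvd (pow_add (ℓ : ℤ_[ℓ]) _ _ ▸ pow_dvd_pow _ (by omega))
  rw [hcx']
  exact hle (Subgroup.map_subtype_commutator U ▸ Subgroup.mem_map_of_mem U.subtype (inv_mem hc))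

theorem exists_finite_dense_closure (hU : IsStableAt i U) (hK : commutator U ⊔ K = ⊤) :
    ∃ s : Set U, s.Finite ∧ s ⊆ K ∧ Dense (Subgroup.closure s : Set U) := by
  have hlift (a : {a | ∃ y ∈ U, HasLeadingTerm (i + 1) y a}) :
      ∃ x ∈ K, HasLeadingTerm (i + 1) x.1 a.1 :=
    have ⟨_, hy, hya⟩ := a.2
    hU.exists_mem_hasLeadingTerm hK hy hya
  choose g hgK hg using hlift
  refine ⟨Set.range g, Set.finite_range g, Set.range_subset_iff.2 hgK, Subtype.dense_iff.2 ?_⟩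
  refine subset_closure_of_hasLeadingTerm (D := (Subgroup.closure (Set.range g)).map U.subtype)
    (Subgroup.map_subtype_le _) hU.add_three_le
    (fun x hx => ⟨1, one_mem _, by simpa using hU.le_principalCongruence hx⟩)
    fun k x hx a ha => ?_
  have hgen := Subgroup.subset_closure
    (Set.mem_range_self (f := g) ⟨a, hU.exists_hasLeadingTerm k x hx a ha⟩)
  exact ⟨_, Subgroup.mem_map_of_mem U.subtype hgen, hg _⟩

theorem eq_top_of_sup_commutator_eq_top [K.Normal] (hU : IsStableAt i U)
    (hclosed : IsClosed (U : Set (GL n ℤ_[ℓ]))) (hK : commutator U ⊔ K = ⊤) : K = ⊤ := by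
  have : CompactSpace U := isCompact_iff_compactSpace.1 hclosed.isCompact
  obtain ⟨s, hs, hsK, hdense⟩ := hU.exists_finite_dense_closure hK
  have hUℓ : U ≤ principalCongruence n (ℓ : ℤ_[ℓ]) := hU.le_principalCongruence.trans
    (principalCongruence_le_of_dvd (dvd_pow_self _ i.succ_ne_zero))
  have (k : ℕ) := isNilpotent_quotient_principalCongruence hUℓ k
  have hle := commutator_le_of_dense_closure (hasBasis_nhds_one_subgroupOf U) hs hdense hsK
  rwa [sup_eq_right.2 hle] at hK

theorem subsingleton_of_surjective {S : Type*} [Group S] [Group.IsPerfect S]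
    (hU : IsStableAt i U) (hclosed : IsClosed (U : Set (GL n ℤ_[ℓ]))) {f : U →* S}
    (hf : Function.Surjective f) : Subsingleton S := by
  have hsup : commutator U ⊔ f.ker = ⊤ := by
    rw [← Subgroup.comap_map_eq, map_commutator_eq, MonoidHom.range_eq_top.2 hf, ← commutator_def,
      Group.isPerfect_def.1 inferInstance, Subgroup.comap_top]
  have hker := hU.eq_top_of_sup_commutator_eq_top hclosed hsup
  have hone (s : S) : s = 1 := by
    obtain ⟨u, rfl⟩ := hf s
    exact MonoidHom.mem_ker.1 (hker ▸ Subgroup.mem_top u)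
  exact ⟨fun s t => by rw [hone s, hone t]⟩

end IsStableAt

section SimpleQuotient

variable {S : Type*} [Group S] [IsSimpleGroup S]

theorem subgroupOf_le_ker_or_surjective {G : Type*} [Group G] {N : Subgroup G} {ψ : N →* S}
    (hψ : Function.Surjective ψ) (Γ : Subgroup G) [Γ.Normal] :
    Γ.subgroupOf N ≤ ψ.ker ∨
      Function.Surjective (ψ.comp (Subgroup.inclusion (inf_le_left : N ⊓ Γ ≤ N))) := by
  rw [← Subgroup.map_eq_bot_iff]
  refine (Subgroup.Normal.map inferInstance ψ hψ).eq_bot_or_eq_top.imp_right fun htop s => ?_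
  obtain ⟨x, hx, rfl⟩ := htop ▸ Subgroup.mem_top s
  exact ⟨⟨x, x.2, hx⟩, rfl⟩

theorem principalCongruence_subgroupOf_le_ker [Group.IsPerfect S] {N : Subgroup (GL n ℤ_[ℓ])}
    (hN : IsClosed (N : Set (GL n ℤ_[ℓ]))) {ψ : N →* S} (hψ : Function.Surjective ψ) :
    (principalCongruence n (ℓ : ℤ_[ℓ])).subgroupOf N ≤ ψ.ker := by
  obtain ⟨i, hi⟩ := exists_isStableAt_inf_principalCongruence N
  have hkill : (principalCongruence n ((ℓ : ℤ_[ℓ]) ^ (i + 1))).subgroupOf N ≤ ψ.ker := by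
    refine (subgroupOf_le_ker_or_surjective hψ _).resolve_right fun hsurj => ?_
    have := hi.subsingleton_of_surjective (hN.inter (isClosed_principalCongruence _)) hsurj
    exact not_subsingleton S this
  refine (subgroupOf_le_ker_or_surjective hψ _).resolve_right fun hsurj => ?_
  let V := N ⊓ principalCongruence n (ℓ : ℤ_[ℓ])
  have hkillV : (principalCongruence n ((ℓ : ℤ_[ℓ]) ^ (i + 1))).subgroupOf V ≤
      (ψ.comp (Subgroup.inclusion inf_le_left)).ker := fun x hx => hkill hx
  have : Group.IsNilpotent (V ⧸ _) := isNilpotent_quotient_principalCongruence inf_le_right (i + 1)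
  exact Group.IsPerfect.not_isNilpotent S <| Group.nilpotent_of_surjective _
    (QuotientGroup.lift_surjective_of_surjective _ _ hsurj hkillV)

end SimpleQuotient

end PadicNormalSubgroups

section FullImage

theorem mem_span_sq_eq_zero_of_trace_eq_zero {R : Type*} [CommRing R]
    {a : Matrix (Fin 2) (Fin 2) R} (ha : a.trace = 0) :
    a ∈ Submodule.span R {b : Matrix (Fin 2) (Fin 2) R | b * b = 0 ∧ (1 + b).det = 1} := by
  have hdecomp : a = (a 0 1 + a 0 0) • !![0, 1; 0, 0] + (a 1 0 - a 0 0) • !![0, 0; 1, 0] +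
      a 0 0 • !![1, -1; 1, -1] := by
    have h11 : a 1 1 = -a 0 0 := eq_neg_of_add_eq_zero_right (trace_fin_two a ▸ ha)
    ext i j
    fin_cases i <;> fin_cases j <;> simp [h11]
  rw [hdecomp]
  refine add_mem (add_mem ?_ ?_) ?_ <;> refine Submodule.smul_mem _ _ (Submodule.subset_span ?_) <;>
    simp [det_fin_two, ← Matrix.ext_iff, Fin.forall_fin_two]

variable {n : Type*} [Fintype n] [DecidableEq n] {ℓ : ℕ} [Fact ℓ.Prime]

namespace HasLeadingTerm

variable {j : ℕ} {x : GL n ℤ_[ℓ]} {a : Matrix n n (ZMod ℓ)}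

theorem one : HasLeadingTerm j (1 : GL n ℤ_[ℓ]) 0 :=
  ⟨0, by simp, map_zero _⟩

theorem pow (hx : HasLeadingTerm (j + 1) x a) (m : ℕ) :
    HasLeadingTerm (j + 1) (x ^ m) (m • a) := by
  induction m with
  | zero => simpa using one
  | succ m ih => simpa only [pow_succ, succ_nsmul] using ih.mul hx

theorem trace_eq_zero (hx : HasLeadingTerm (j + 1) x a) (hdet : x.1.det = 1) : a.trace = 0 := by
  obtain ⟨A, hA, rfl⟩ := hx
  have hℓ : (ℓ : ℤ_[ℓ]) ^ (j + 1) ≠ 0 :=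
    pow_ne_zero _ (mod_cast (Fact.out : ℓ.Prime).ne_zero)
  rw [hA, det_one_add_smul] at hdet
  generalize (Polynomial.eval _ _ : ℤ_[ℓ]) = c at hdet
  have htrace : A.trace = ℓ * -(c * (ℓ : ℤ_[ℓ]) ^ j) := by
    refine mul_left_cancel₀ hℓ ?_
    linear_combination hdet
  have hker : A.trace ∈ RingHom.ker (PadicInt.toZMod (p := ℓ)) := by
    rw [ker_toZMod_eq_span, Ideal.mem_span_singleton]
    exact ⟨_, htrace⟩
  rw [← RingHom.mem_ker.1 hker, AddMonoidHom.map_trace, RingHom.mapMatrix_apply]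

end HasLeadingTerm

theorem hasLeadingTerm_pow_prime_of_sq_eq_zero (hℓ : 5 ≤ ℓ) {x : GL n ℤ_[ℓ]}
    {a : Matrix n n (ZMod ℓ)} (hx : PadicInt.toZMod.mapMatrix x.1 = 1 + a) (ha : a * a = 0) :
    HasLeadingTerm 1 (x ^ ℓ) a := by
  obtain ⟨Y, hY⟩ : ∃ Y, x.1 = 1 + Y := ⟨x.1 - 1, (add_sub_cancel _ _).symm⟩
  have hYa : PadicInt.toZMod.mapMatrix Y = a := by
    rw [hY, map_add, map_one] at hx
    exact add_left_cancel hx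
  obtain ⟨C, hC⟩ : ∃ C, Y ^ 2 = (ℓ : ℤ_[ℓ]) • C :=
    (mapMatrix_eq_zero_iff ker_toZMod_eq_span).1 (by rw [map_pow, hYa, pow_two, ha])
  obtain ⟨B, hB⟩ := exists_one_add_pow_prime_eq (Fact.out : ℓ.Prime) Y
  have hYℓ : Y ^ ℓ = (ℓ : ℤ_[ℓ]) • (ℓ : ℤ_[ℓ]) • (C ^ 2 * Y ^ (ℓ - 4)) := by
    have hpow : Y ^ ℓ = (Y ^ 2) ^ 2 * Y ^ (ℓ - 4) := by
      rw [← pow_mul, ← pow_add, Nat.add_sub_cancel' (by omega)]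
    rw [hpow, hC, smul_pow, pow_two (ℓ : ℤ_[ℓ]), mul_smul, smul_mul_assoc, smul_mul_assoc]
  refine ⟨Y + (ℓ : ℤ_[ℓ]) • (C * B + C ^ 2 * Y ^ (ℓ - 4)), ?_, ?_⟩
  · rw [Units.val_pow_eq_pow_val, hY, hB, hYℓ, hC, smul_mul_assoc]
    simp only [← Nat.cast_smul_eq_nsmul ℤ_[ℓ]]
    module
  · rw [map_add, mapMatrix_toZMod_smul, add_zero, hYa]

/-- The leading terms at level `j + 1` of the elements of `D`. -/
def leadingTerms (j : ℕ) (D : Subgroup (GL n ℤ_[ℓ])) :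
    Submodule (ZMod ℓ) (Matrix n n (ZMod ℓ)) where
  carrier := {a | ∃ x ∈ D, HasLeadingTerm (j + 1) x a}
  zero_mem' := ⟨1, one_mem D, .one⟩
  add_mem' := fun ⟨x, hx, ha⟩ ⟨y, hy, hb⟩ => ⟨x * y, mul_mem hx hy, ha.mul hb⟩
  smul_mem' := fun c a ⟨x, hx, ha⟩ => ⟨x ^ c.val, pow_mem hx _, by
    simpa only [← Nat.cast_smul_eq_nsmul (ZMod ℓ), ZMod.natCast_zmod_val] using ha.pow c.val⟩

variable {D G : Subgroup (GL (Fin 2) ℤ_[ℓ])}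

theorem mem_leadingTerms_of_trace_eq_zero (hℓ : 5 ≤ ℓ)
    (hD : SpecialLinearGroup.toGL.range ≤ D.map (GeneralLinearGroup.map PadicInt.toZMod))
    {a : Matrix (Fin 2) (Fin 2) (ZMod ℓ)} (ha : a.trace = 0) : a ∈ leadingTerms 0 D := by
  refine Submodule.span_le.2 ?_ (mem_span_sq_eq_zero_of_trace_eq_zero ha)
  rintro b ⟨hsq, hdet⟩
  obtain ⟨x, hx, hxb⟩ := hD ⟨⟨1 + b, hdet⟩, rfl⟩
  exact ⟨x ^ ℓ, pow_mem hx ℓ,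
    hasLeadingTerm_pow_prime_of_sq_eq_zero hℓ (congrArg Units.val hxb) hsq⟩

theorem ker_det_subset_closure (hℓ : 5 ≤ ℓ)
    (hDdet : D ≤ GeneralLinearGroup.det.ker)
    (hD : SpecialLinearGroup.toGL.range ≤ D.map (GeneralLinearGroup.map PadicInt.toZMod)) :
    ((GeneralLinearGroup.det : GL (Fin 2) ℤ_[ℓ] →* ℤ_[ℓ]ˣ).ker : Set (GL (Fin 2) ℤ_[ℓ])) ⊆
      closure D := by
  refine subset_closure_of_hasLeadingTerm (i := 0) hDdet (by omega) (fun x hx => ?_)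
    fun k x hx a ha => mem_leadingTerms_of_trace_eq_zero hℓ hD
      (ha.trace_eq_zero (congrArg Units.val hx))
  rw [range_toGL_eq_ker_det] at hD
  obtain ⟨d, hd, hdx⟩ := hD (x := GeneralLinearGroup.map PadicInt.toZMod x)
    (by rw [MonoidHom.mem_ker, GeneralLinearGroup.map_det, MonoidHom.mem_ker.1 hx, map_one])
  refine ⟨d, hd, ?_⟩
  rw [zero_add, pow_one, ← ker_GL_map_eq_principalCongruence ker_toZMod_eq_span, MonoidHom.mem_ker,
    map_div, hdx, div_self']

theorem range_toGL_le_map_commutator (hℓ : 5 ≤ ℓ)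
    (hG : SpecialLinearGroup.toGL.range ≤ G.map (GeneralLinearGroup.map PadicInt.toZMod)) :
    (SpecialLinearGroup.toGL : SL(2, ZMod ℓ) →* GL (Fin 2) (ZMod ℓ)).range ≤
      (⁅G, G⁆ : Subgroup _).map (GeneralLinearGroup.map PadicInt.toZMod) := by
  obtain ⟨a, ha, hasq⟩ := exists_sq_ne_one_of_five_le hℓ
  rw [Subgroup.map_commutator]
  refine le_trans ?_ (Subgroup.commutator_mono hG hG)
  rw [← map_commutator_eq, SL2.commutator_eq_top ha hasq, MonoidHom.range_eq_map]

theorem eq_top_of_range_toGL_le_map (hℓ : 5 ≤ ℓ)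
    (hclosed : IsClosed (G : Set (GL (Fin 2) ℤ_[ℓ])))
    (hdet : G.map GeneralLinearGroup.det = ⊤)
    (hG : SpecialLinearGroup.toGL.range ≤ G.map (GeneralLinearGroup.map PadicInt.toZMod)) :
    G = ⊤ := by
  have hcomm : ⁅G, G⁆ ≤ G := Subgroup.commutator_le_self G
  have hker : (GeneralLinearGroup.det : GL (Fin 2) ℤ_[ℓ] →* ℤ_[ℓ]ˣ).ker ≤ G :=
    (ker_det_subset_closure hℓ ((Subgroup.commutator_mono le_top le_top).trans
      (Abelianization.commutator_subset_ker _)) (range_toGL_le_map_commutator hℓ hG)).trans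
      (closure_minimal hcomm hclosed)
  rw [← sup_eq_left.2 hker, ← Subgroup.comap_map_eq, hdet, Subgroup.comap_top]

end FullImage

section Reduction

variable {ℓ : ℕ} [Fact ℓ.Prime]

theorem unitsMap_toZMod_surjective :
    Function.Surjective (Units.map (PadicInt.toZMod (p := ℓ) : ℤ_[ℓ] →* ZMod ℓ)) :=
  have := IsLocalHom.of_surjective (PadicInt.toZMod (p := ℓ)) (ZMod.ringHom_surjective _)
  IsLocalRing.surjective_units_map_of_local_ringHom _ (ZMod.ringHom_surjective _) this

theorem map_det_map_toZMod_eq_top {n : Type*} [Fintype n] [DecidableEq n]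
    {G : Subgroup (GL n ℤ_[ℓ])} (hdet : G.map GeneralLinearGroup.det = ⊤) :
    (G.map (GeneralLinearGroup.map (PadicInt.toZMod (p := ℓ)))).map GeneralLinearGroup.det = ⊤ := by
  have hcomp : GeneralLinearGroup.det.comp (GeneralLinearGroup.map (PadicInt.toZMod (p := ℓ))) =
      (Units.map (PadicInt.toZMod (p := ℓ) : ℤ_[ℓ] →* ZMod ℓ)).comp
        (GeneralLinearGroup.det (n := n)) :=
    MonoidHom.ext fun _ => GeneralLinearGroup.map_det _ _
  rw [Subgroup.map_map, hcomp, ← Subgroup.map_map, hdet, ← MonoidHom.range_eq_map,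
    MonoidHom.range_eq_top.2 unitsMap_toZMod_surjective]

theorem exists_surjective_map_of_ker_subgroupOf_le {G H S : Type*} [Group G] [Group H] [Group S]
    (ρ : G →* H) {N : Subgroup G} {ψ : N →* S} (hψ : Function.Surjective ψ)
    (hker : ρ.ker.subgroupOf N ≤ ψ.ker) : ∃ f : N.map ρ →* S, Function.Surjective f := by
  have hρ := ρ.subgroupMap_surjective N
  have hle : (ρ.subgroupMap N).ker ≤ ψ.ker := fun x hx => hker (congrArg Subtype.val hx)
  have hlift : (ρ.subgroupMap N).liftOfSurjective hρ ⟨ψ, hle⟩ ∘ ρ.subgroupMap N = ψ :=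
    funext (MonoidHom.liftOfRightInverse_comp_apply _ _ _ _)
  exact ⟨_, .of_comp (hlift ▸ hψ)⟩

end Reduction

/-- Fix a prime `ℓ` and let `G` be a closed subgroup of `GL₂(ℤ_ℓ)` with
`det(G) = ℤ_ℓ^×`. If `S` is a nonabelian simple group that occurs as a quotient of some closed
normal subgroup of `G`, then `ℓ ≥ 5`, `G = GL₂(ℤ_ℓ)`, and `S` is isomorphic to
`SL₂(𝔽_ℓ)/{±I}` (expressed by a surjective homomorphism `SL₂(𝔽_ℓ) → S` with kernel `{1, -1}`). -/
theorem nonabelian_simple_quotient_forces_full_image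
    (ℓ : ℕ) [Fact ℓ.Prime]
    (G : Subgroup (GL (Fin 2) ℤ_[ℓ]))
    (hclosed : IsClosed (G : Set (GL (Fin 2) ℤ_[ℓ])))
    (hdet : G.map Matrix.GeneralLinearGroup.det = ⊤)
    (S : Type*) [Group S] (hsimple : IsSimpleGroup S)
    (hnonab : ∃ a b : S, a * b ≠ b * a)
    (N : Subgroup (GL (Fin 2) ℤ_[ℓ])) (hNG : N ≤ G)
    (hNclosed : IsClosed (N : Set (GL (Fin 2) ℤ_[ℓ])))
    (hNnormal : ∀ g ∈ G, ∀ n ∈ N, g * n * g⁻¹ ∈ N)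
    (ψ : N →* S) (hψ : Function.Surjective ψ) :
    5 ≤ ℓ ∧ G = ⊤ ∧
      ∃ φ : SL(2, ZMod ℓ) →* S, Function.Surjective φ ∧
        ∀ x : SL(2, ZMod ℓ), φ x = 1 ↔ x = 1 ∨ x = -1 := by
  let ρ : GL (Fin 2) ℤ_[ℓ] →* GL (Fin 2) (ZMod ℓ) := GeneralLinearGroup.map PadicInt.toZMod
  have : Group.IsPerfect S := isPerfect_of_exists_mul_ne hnonab
  obtain ⟨f, hf⟩ : ∃ f : N.map ρ →* S, Function.Surjective f := by
    refine exists_surjective_map_of_ker_subgroupOf_le ρ hψ ?_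
    rw [ker_GL_map_eq_principalCongruence ker_toZMod_eq_span]
    exact principalCongruence_subgroupOf_le_ker hNclosed hψ
  have hunsolvable : ¬ Group.IsSolvable (N.map ρ) := fun _ =>
    Group.IsPerfect.not_isSolvable S (Group.isSolvable_of_surjective hf)
  have hℓ : 5 ≤ ℓ := by
    by_contra! hlt
    have := isSolvable_GL_two_of_lt_five hlt
    exact hunsolvable inferInstance
  have hSL : SpecialLinearGroup.toGL.range ≤ G.map ρ :=
    (isSolvable_or_range_toGL_le (map_det_map_toZMod_eq_top hdet)).resolve_left fun _ =>
      hunsolvable <| Group.isSolvable_of_isSolvable_injective <|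
        Subgroup.inclusion_injective (Subgroup.map_mono hNG)
  have hN : SpecialLinearGroup.toGL.range ≤ Subgroup.normalizer (N.map ρ) := hSL.trans <|
    (Subgroup.map_mono (Subgroup.le_normalizer_iff.2 hNnormal)).trans (Subgroup.le_normalizer_map ρ)
  have hK := exists_sq_ne_one_of_five_le hℓ
  obtain ⟨φ, hφ⟩ := exists_surjective_SL_two_of_normalized hK hN hf
  exact ⟨hℓ, eq_top_of_range_toGL_le_map hℓ hclosed hdet hSL, φ, hφ,
    apply_eq_one_iff_eq_one_or_eq_neg_one hK hφ⟩
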